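/- Let d ≥ 1, α ∈ (0,1] with 2α < d, A, B > 0, T > 0. Let ρ, n ∈ C^1([0,T] × ℝ^d; [0,∞)) be such that there is a fixed compact set containing the x-supports of ρ(t,·) and n(t,·) for all t ∈ [0,T], and let u, v ∈ C^1([0,T] × ℝ^d; ℝ^d) with L := sup_{t,x} |∇v(t,x)| < ∞, such that the continuity equations A ∂_t ρ + B ∇·(ρ u) = 0 and A ∂_t n + B ∇·(n v) = 0 hold pointwise. Set E(t) := ∫_{ℝ^d} (ρ−n)(t,x) ( K ⋆ (ρ−n)(t,·) )(x) dx. Then E is differentiable on (0,T), and there exists C > 0 depending only on d, α and L such that for all t ∈ (0,T): −B ∫_{ℝ^d} ρ(t,x) (u−v)(t,x) · ∇( K ⋆ (ρ−n)(t,·) )(x) dx ≤ −(A/2) E'(t) + C B E(t). -/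

import Mathlib

open MeasureTheory Real
open scoped RealInnerProductSpace

/-- Divergence of a vector field on Euclidean space. -/
noncomputable def ediv {d : ℕ}
    (G : EuclideanSpace ℝ (Fin d) → EuclideanSpace ℝ (Fin d))
    (ξ : EuclideanSpace ℝ (Fin d)) : ℝ :=
  ∑ i, fderiv ℝ G ξ (EuclideanSpace.single i 1) i


/-- Euclidean space shorthand. -/
abbrev Eu (d : ℕ) := EuclideanSpace ℝ (Fin d)

/-- Heat kernel. -/
noncomputable def hk (d : ℕ) (t : ℝ) (x : Eu d) : ℝ :=
  (4 * π * t) ^ (-((d : ℝ) / 2)) * Real.exp (-(‖x‖ ^ 2 / (4 * t)))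

open scoped SchwartzMap FourierTransform Laplacian LineDeriv ComplexConjugate

theorem resolvent_growth (d : ℕ) (l : ℝ) (hl : 0 < l) :
    (fun x : Eu d => (l + (2 * π) ^ 2 * ‖x‖ ^ 2)⁻¹).HasTemperateGrowth := by
  have h := (Function.hasTemperateGrowth_one_add_norm_sq_rpow (Eu d) (-1)).comp
    (((2 * π / √l) • ContinuousLinearMap.id ℝ (Eu d)).hasTemperateGrowth)
  have h2 : (fun _ : Eu d => l⁻¹).HasTemperateGrowth := Function.HasTemperateGrowth.const _
  have h3 := h2.mul h
  have e : (fun x : Eu d => (l + (2 * π) ^ 2 * ‖x‖ ^ 2)⁻¹) = (fun x : Eu d => l⁻¹) *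
      ((fun x : Eu d => (1 + ‖x‖ ^ 2) ^ (-1 : ℝ)) ∘
        ⇑((2 * π / √l) • ContinuousLinearMap.id ℝ (Eu d))) := by
    ext x
    simp only [Pi.mul_apply, Function.comp_apply, smul_apply, ContinuousLinearMap.id_apply,
      norm_smul, mul_pow, div_pow, norm_div, norm_mul, Real.norm_eq_abs, sq_abs]
    rw [Real.sq_sqrt hl.le, Real.rpow_neg_one, ← mul_inv]
    congr 1
    field_simp
  rw [e]
  exact h3

theorem exists_resolvent_complex (d : ℕ) (l : ℝ) (hl : 0 < l) (f : 𝓢(Eu d, ℂ)) :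
    ∃ ψ : 𝓢(Eu d, ℂ), l • ψ - Δ ψ = f := by
  refine ⟨SchwartzMap.fourierMultiplierCLM ℂ (fun x : Eu d => (l + (2 * π) ^ 2 * ‖x‖ ^ 2)⁻¹) f, ?_⟩
  have hg := resolvent_growth d l hl
  rw [SchwartzMap.laplacian_eq_fourierMultiplierCLM,
    SchwartzMap.fourierMultiplierCLM_fourierMultiplierCLM_apply (by fun_prop) hg]
  have h1 : ∀ c : ℝ, ∀ g : 𝓢(Eu d, ℂ), c • g = SchwartzMap.fourierMultiplierCLM ℂ (fun _ : Eu d => c) g := by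
    intro c g
    rw [SchwartzMap.fourierMultiplierCLM_const]; rfl
  apply (FourierTransform.fourierEquiv ℂ 𝓢(Eu d, ℂ)).injective
  ext x
  rw [neg_smul, sub_neg_eq_add]
  simp only [FourierTransform.fourierEquiv_apply, FourierTransform.fourier_add, FourierTransform.fourier_smul,
    SchwartzMap.fourierMultiplierCLM_apply, FourierTransform.fourier_fourierInv_eq, add_apply, smul_apply]
  rw [SchwartzMap.smulLeftCLM_apply_apply hg, SchwartzMap.smulLeftCLM_apply_apply (by fun_prop)]
  simp only [Pi.mul_apply, smul_smul, ← add_smul]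
  have : l + (2 * π) ^ 2 * ‖x‖ ^ 2 ≠ 0 := by positivity
  have h : (l * (l + (2 * π) ^ 2 * ‖x‖ ^ 2)⁻¹ + (2 * π) ^ 2 * (‖x‖ ^ 2 * (l + (2 * π) ^ 2 * ‖x‖ ^ 2)⁻¹)) = 1 := by
    field_simp
  rw [h, one_smul]

theorem exists_resolvent (d : ℕ) (l : ℝ) (hl : 0 < l) (f : 𝓢(Eu d, ℝ)) :
    ∃ ψ : 𝓢(Eu d, ℝ), l • ψ - Δ ψ = f := by
  obtain ⟨ψ, hψ⟩ := exists_resolvent_complex d l hl (f.postcompCLM Complex.ofRealCLM)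
  refine ⟨ψ.postcompCLM Complex.reCLM, ?_⟩
  have hd : ∀ (m : Eu d) (g : 𝓢(Eu d, ℂ)), ∂_{m} (g.postcompCLM Complex.reCLM) = (∂_{m} g).postcompCLM Complex.reCLM := by
    intro m g
    ext x
    rw [SchwartzMap.postcompCLM_apply, SchwartzMap.lineDerivOp_apply_eq_fderiv, SchwartzMap.lineDerivOp_apply_eq_fderiv]
    have := (Complex.reCLM.hasFDerivAt.comp x (g.hasFDerivAt x)).fderiv
    exact congrArg (fun T => T m) this
  have hL : Δ (ψ.postcompCLM Complex.reCLM) = (Δ ψ).postcompCLM Complex.reCLM := by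
    rw [SchwartzMap.laplacian_eq_sum (stdOrthonormalBasis ℝ (Eu d)), SchwartzMap.laplacian_eq_sum (stdOrthonormalBasis ℝ (Eu d))]
    simp only [hd, map_sum]
  rw [hL, ← map_smul, ← map_sub, hψ]
  ext x
  simp

theorem heat_fourier (d : ℕ) (t : ℝ) (ht : 0 < t) (f : 𝓢(Eu d, ℂ)) (x : Eu d) :
    ∫ y, (hk d t (x - y) : ℂ) * f y =
      ∫ w, Complex.exp (-(4 * π ^ 2 * t : ℝ) * ‖w‖ ^ 2 + 2 * π * Complex.I * ⟪x, w⟫) * 𝓕 f w := by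
  have hb : 0 < ((4 * π ^ 2 * t : ℝ) : ℂ).re := by rw [Complex.ofReal_re]; positivity
  have J := GaussianFourier.integrable_cexp_neg_mul_sq_norm_add hb (2 * π * Complex.I) x
  have h := (VectorFourier.integral_fourierIntegral_smul_eq_flip (L := innerₗ (Eu d))
      Real.continuous_fourierChar continuous_inner J (f.integrable (μ := volume)))
  have h' : ∫ y, 𝓕 (fun v : Eu d => Complex.exp (-(4 * π ^ 2 * t : ℝ) * ‖v‖ ^ 2 + 2 * π * Complex.I * ⟪x, v⟫)) y * f y =
    ∫ w, Complex.exp (-(4 * π ^ 2 * t : ℝ) * ‖w‖ ^ 2 + 2 * π * Complex.I * ⟪x, w⟫) * 𝓕 f w := by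
    simpa using! h
  rw [← h']
  congr with y
  rw [fourier_gaussian_innerProductSpace' hb]
  congr 1
  unfold hk
  have e1 : (π : ℂ) / ((4 * π ^ 2 * t : ℝ) : ℂ) = (((4 * π * t)⁻¹ : ℝ) : ℂ) := by
    rw [← Complex.ofReal_div]; congr 1; field_simp
  rw [e1]
  have e2 : ((Module.finrank ℝ (Eu d) : ℂ) / 2) = (((d : ℝ) / 2 : ℝ) : ℂ) := by simp
  rw [e2, ← Complex.ofReal_cpow (by positivity), Real.inv_rpow (by positivity), ← Real.rpow_neg (by positivity),
    Complex.ofReal_mul, Complex.ofReal_exp]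
  congr 2
  push_cast
  field_simp

theorem fourier_resolvent (d : ℕ) (l : ℝ) (ψ : 𝓢(Eu d, ℂ)) (w : Eu d) :
    𝓕 (l • ψ - Δ ψ) w = (l + (2 * π) ^ 2 * ‖w‖ ^ 2 : ℝ) • 𝓕 ψ w := by
  rw [SchwartzMap.laplacian_eq_fourierMultiplierCLM, neg_smul, sub_neg_eq_add]
  simp only [FourierTransform.fourier_add, FourierTransform.fourier_smul,
    SchwartzMap.fourierMultiplierCLM_apply, FourierTransform.fourier_fourierInv_eq, add_apply, smul_apply]
  rw [SchwartzMap.smulLeftCLM_apply_apply (by fun_prop)]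
  simp only [smul_smul, ← add_smul]

theorem heat_resolvent_complex (d : ℕ) (l : ℝ) (hl : 0 < l) (ψ : 𝓢(Eu d, ℂ)) (x : Eu d) :
    ∫ t in Set.Ioi (0 : ℝ), (Real.exp (-(l * t)) : ℂ) *
      ∫ y, (hk d t (x - y) : ℂ) * (l • ψ - Δ ψ) y = ψ x := by
  set f : 𝓢(Eu d, ℂ) := l • ψ - Δ ψ with hf
  have step1 : ∫ t in Set.Ioi (0 : ℝ), (Real.exp (-(l * t)) : ℂ) * ∫ y, (hk d t (x - y) : ℂ) * f y
      = ∫ t in Set.Ioi (0 : ℝ), ∫ w, (Real.exp (-((l + (2 * π) ^ 2 * ‖w‖ ^ 2) * t)) : ℂ) *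
        (Complex.exp (2 * π * Complex.I * ⟪x, w⟫) * 𝓕 f w) := by
    refine setIntegral_congr_fun measurableSet_Ioi fun t ht => ?_
    rw [heat_fourier d t ht, ← integral_const_mul]
    congr with w
    rw [← mul_assoc, ← mul_assoc, Complex.ofReal_exp, Complex.ofReal_exp, ← Complex.exp_add, ← Complex.exp_add]
    congr 2
    push_cast
    ring
  rw [step1, integral_integral_swap]
  · have : ∀ w, ∫ t in Set.Ioi (0 : ℝ), (Real.exp (-((l + (2 * π) ^ 2 * ‖w‖ ^ 2) * t)) : ℂ) *
        (Complex.exp (2 * π * Complex.I * ⟪x, w⟫) * 𝓕 f w) = Complex.exp (2 * π * Complex.I * ⟪x, w⟫) * 𝓕 ψ w := by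
      intro w
      have hp : 0 < l + (2 * π) ^ 2 * ‖w‖ ^ 2 := by positivity
      rw [integral_mul_const, integral_complex_ofReal, hf, fourier_resolvent]
      have : ∫ t in Set.Ioi (0 : ℝ), Real.exp (-((l + (2 * π) ^ 2 * ‖w‖ ^ 2) * t)) = (l + (2 * π) ^ 2 * ‖w‖ ^ 2)⁻¹ := by
        have := integral_exp_mul_Ioi (a := -(l + (2 * π) ^ 2 * ‖w‖ ^ 2)) (by linarith) 0
        simp only [mul_zero, Real.exp_zero, neg_div_neg_eq] at this
        rw [← one_div, ← this]
        simp only [neg_mul]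
      rw [this, Complex.real_smul, mul_left_comm, ← mul_assoc _ _ (𝓕 ψ w), ← Complex.ofReal_mul, inv_mul_cancel₀ hp.ne']
      simp
    simp_rw [this]
    have h := FourierTransform.fourierInv_fourier_eq (F := 𝓢(Eu d, ℂ)) ψ
    rw [← congrArg (fun g : 𝓢(Eu d, ℂ) => g x) h]
    rw [SchwartzMap.fourierInv_coe, Real.fourierInv_eq']
    congr with w
    rw [smul_eq_mul, real_inner_comm]
    congr 2
    push_cast
    ring
  · have h0 : Integrable (fun t : ℝ => (Real.exp (-(l * t)))) (volume.restrict (Set.Ioi 0)) := by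
      have := integrableOn_exp_mul_Ioi (a := -l) (by linarith) 0
      simpa [IntegrableOn] using this
    have h1 := h0.mul_prod ((𝓕 f).integrable (μ := volume)).norm
    refine h1.mono' ?_ ?_
    · apply Continuous.aestronglyMeasurable
      have := (𝓕 f).continuous
      fun_prop
    · have hm : ∀ᵐ z : ℝ × Eu d ∂((volume.restrict (Set.Ioi 0)).prod volume), 0 < z.1 := by
        have := Measure.quasiMeasurePreserving_fst (μ := volume.restrict (Set.Ioi (0:ℝ))) (ν := (volume : Measure (Eu d)))
        exact this.ae (ae_restrict_mem measurableSet_Ioi)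
      filter_upwards [hm] with z hz
      simp only [Function.uncurry, norm_mul]
      have e : ‖Complex.exp (2 * π * Complex.I * ⟪x, z.2⟫)‖ = 1 := by
        rw [show (2 * π * Complex.I * ⟪x, z.2⟫ : ℂ) = ((2 * π * ⟪x, z.2⟫ : ℝ) : ℂ) * Complex.I by push_cast; ring]
        exact Complex.norm_exp_ofReal_mul_I _
      rw [e, one_mul, Complex.norm_real, Real.norm_eq_abs, abs_of_pos (Real.exp_pos _)]
      gcongr
      nlinarith [mul_nonneg (show 0 ≤ (2 * π) ^ 2 * ‖z.2‖ ^ 2 by positivity) hz.le]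

theorem heat_resolvent (d : ℕ) (l : ℝ) (hl : 0 < l) (φ f : 𝓢(Eu d, ℝ)) (hφ : l • φ - Δ φ = f) (x : Eu d) :
    ∫ t in Set.Ioi (0 : ℝ), Real.exp (-(l * t)) *
      ∫ y, hk d t (x - y) * f y = φ x := by
  have h := heat_resolvent_complex d l hl (φ.postcompCLM Complex.ofRealCLM) x
  have hd : ∀ (m : Eu d) (g : 𝓢(Eu d, ℝ)), ∂_{m} (g.postcompCLM Complex.ofRealCLM) = (∂_{m} g).postcompCLM Complex.ofRealCLM := by
    intro m g
    ext x
    rw [SchwartzMap.postcompCLM_apply, SchwartzMap.lineDerivOp_apply_eq_fderiv, SchwartzMap.lineDerivOp_apply_eq_fderiv]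
    have := (Complex.ofRealCLM.hasFDerivAt.comp x (g.hasFDerivAt x)).fderiv
    exact congrArg (fun T => T m) this
  have hL : Δ (φ.postcompCLM Complex.ofRealCLM) = (Δ φ).postcompCLM Complex.ofRealCLM := by
    rw [SchwartzMap.laplacian_eq_sum (stdOrthonormalBasis ℝ (Eu d)), SchwartzMap.laplacian_eq_sum (stdOrthonormalBasis ℝ (Eu d))]
    simp only [hd, map_sum]
  rw [hL, ← map_smul, ← map_sub, hφ] at h
  simp only [SchwartzMap.postcompCLM_apply, Complex.ofRealCLM_apply, ← Complex.ofReal_mul,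
    integral_complex_ofReal] at h
  exact_mod_cast h

/-- Standard basis vector. -/
noncomputable abbrev be (d : ℕ) (i : Fin d) : Eu d := EuclideanSpace.single i (1 : ℝ)

theorem norm_be (d : ℕ) (i : Fin d) : ‖be d i‖ = 1 := by simp [be]

theorem lip_growth {d : ℕ} {v : Eu d → Eu d} (hv : ContDiff ℝ 1 v) {L : ℝ}
    (hL : ∀ x, ‖fderiv ℝ v x‖ ≤ L) (x : Eu d) : ‖v x‖ ≤ ‖v 0‖ + L * ‖x‖ := by
  have h := (convex_univ (𝕜 := ℝ) (E := Eu d)).norm_image_sub_le_of_norm_fderiv_le (f := v)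
    (fun x _ => hv.differentiable one_ne_zero x) (fun x _ => hL x) (Set.mem_univ 0) (Set.mem_univ x)
  have h2 := norm_le_norm_add_norm_sub' (v x) (v 0)
  simp only [sub_zero] at h
  linarith

theorem fderiv_coord {d : ℕ} {v : Eu d → Eu d} (hv : ContDiff ℝ 1 v) (x w : Eu d) (i : Fin d) :
    fderiv ℝ (fun x => v x i) x w = (fderiv ℝ v x w) i := by
  have h := (EuclideanSpace.proj (𝕜 := ℝ) i).hasFDerivAt.comp x (hv.differentiable one_ne_zero x).hasFDerivAt
  have h2 := h.fderiv
  exact congrArg (fun T => T w) h2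

theorem integrable_v_mul {d : ℕ} {v : Eu d → Eu d} (hv : ContDiff ℝ 1 v) {L : ℝ}
    (hL : ∀ x, ‖fderiv ℝ v x‖ ≤ L) (g : 𝓢(Eu d, ℝ)) (i : Fin d) :
    Integrable (fun x => v x i * g x) := by
  have h1 := ((g.integrable (μ := volume)).norm.const_mul ‖v 0‖).add
    ((g.integrable_pow_mul volume 1).const_mul L)
  refine h1.mono' ?_ ?_
  · apply Continuous.aestronglyMeasurable
    have := hv.continuous
    have := g.continuous
    fun_prop
  · filter_upwards with x
    simp only [Pi.add_apply, pow_one, norm_mul]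
    have h2 := lip_growth hv hL x
    have h3 := PiLp.norm_apply_le (v x) i
    nlinarith [norm_nonneg (g x)]

theorem integrable_dv_mul {d : ℕ} {v : Eu d → Eu d} (hv : ContDiff ℝ 1 v) {L : ℝ}
    (hL : ∀ x, ‖fderiv ℝ v x‖ ≤ L) (g : 𝓢(Eu d, ℝ)) (i j : Fin d) :
    Integrable (fun x => (fderiv ℝ v x (be d j)) i * g x) := by
  refine ((g.integrable (μ := volume)).norm.const_mul L).mono' ?_ ?_
  · apply Continuous.aestronglyMeasurable
    have := hv.continuous_fderiv one_ne_zero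
    have := g.continuous
    fun_prop
  · filter_upwards with x
    rw [norm_mul]
    gcongr
    refine (PiLp.norm_apply_le _ i).trans (((fderiv ℝ v x).le_opNorm _).trans ?_)
    rw [norm_be, mul_one]; exact hL x

theorem ibp_v {d : ℕ} {v : Eu d → Eu d} (hv : ContDiff ℝ 1 v) {L : ℝ}
    (hL : ∀ x, ‖fderiv ℝ v x‖ ≤ L) (g : 𝓢(Eu d, ℝ)) (i j : Fin d) :
    ∫ x, v x i * (∂_{be d j} g) x = - ∫ x, (fderiv ℝ v x (be d j)) i * g x := by
  have h := integral_mul_fderiv_eq_neg_fderiv_mul_of_integrable (μ := volume) (f := fun x => v x i) (g := g) (v := be d j)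
    (by simp_rw [fderiv_coord hv]; exact integrable_dv_mul hv hL g i j)
    (integrable_v_mul hv hL (∂_{be d j} g) i) (integrable_v_mul hv hL g i)
    (fun x _ => by
      have h := (EuclideanSpace.proj (𝕜 := ℝ) i).hasFDerivAt.comp x (hv.differentiable one_ne_zero x).hasFDerivAt
      exact h.differentiableAt)
    (fun x _ => g.differentiableAt)
  simp_rw [fderiv_coord hv] at h
  exact h

/-- product of Schwartz functions -/
noncomputable def smul2 {d : ℕ} (f g : 𝓢(Eu d, ℝ)) : 𝓢(Eu d, ℝ) :=
  SchwartzMap.pairing (ContinuousLinearMap.mul ℝ ℝ) f g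

theorem smul2_apply {d : ℕ} (f g : 𝓢(Eu d, ℝ)) (x : Eu d) : smul2 f g x = f x * g x := rfl

theorem d_smul2 {d : ℕ} (f g : 𝓢(Eu d, ℝ)) (m x : Eu d) :
    (∂_{m} (smul2 f g)) x = f x * (∂_{m} g) x + (∂_{m} f) x * g x := by
  simp only [SchwartzMap.lineDerivOp_apply_eq_fderiv]
  have h := ((f.hasFDerivAt x).mul (g.hasFDerivAt x)).fderiv
  have h2 := congrArg (fun T => T m) h
  refine h2.trans ?_
  simp [mul_comm]

theorem d_comm {d : ℕ} (f : 𝓢(Eu d, ℝ)) (m n x : Eu d) :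
    (∂_{m} (∂_{n} f)) x = (∂_{n} (∂_{m} f)) x := by
  have key : ∀ m n : Eu d, (∂_{m} (∂_{n} f)) x = fderiv ℝ (fderiv ℝ f) x m n := by
    intro m n
    rw [SchwartzMap.lineDerivOp_apply_eq_fderiv]
    have hd : DifferentiableAt ℝ (fderiv ℝ f) x := (SchwartzMap.fderivCLM ℝ (Eu d) ℝ f).differentiableAt
    have h : HasFDerivAt (fun y => fderiv ℝ f y n) ((fderiv ℝ (fderiv ℝ f) x).flip n) x := by
      simpa using hd.hasFDerivAt.clm_apply (hasFDerivAt_const n x)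
    exact congrArg (fun T => T m) h.fderiv
  rw [key, key]
  have : IsSymmSndFDerivAt ℝ f x := (f.contDiffAt 2).isSymmSndFDerivAt (by simp)
  exact this m n

theorem lap_sum {d : ℕ} (f : 𝓢(Eu d, ℝ)) (x : Eu d) :
    (Δ f) x = ∑ i, (∂_{be d i} (∂_{be d i} f)) x := by
  rw [SchwartzMap.laplacian_eq_sum (EuclideanSpace.basisFun (Fin d) ℝ), sum_apply]
  simp [be]

theorem energy_identity {d : ℕ} (l : ℝ) (φ : 𝓢(Eu d, ℝ)) :
    ∫ x, (l * φ x - (Δ φ) x) * φ x = ∫ x, (l * φ x ^ 2 + ∑ i, (∂_{be d i} φ) x ^ 2) := by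
  have I1 : Integrable (fun x => l * φ x ^ 2) := by
    simpa [smul2_apply, sq] using (smul2 φ φ).integrable.const_mul l
  have I2 : ∀ i, Integrable (fun x => φ x * (∂_{be d i} (∂_{be d i} φ)) x) := fun i => (smul2 φ (∂_{be d i} (∂_{be d i} φ))).integrable
  have I3 : ∀ i, Integrable (fun x => (∂_{be d i} φ) x ^ 2) := fun i => by
    simp_rw [sq]
    exact (smul2 (∂_{be d i} φ) (∂_{be d i} φ)).integrable
  have : ∀ x, (l * φ x - (Δ φ) x) * φ x = l * φ x ^ 2 - ∑ i, φ x * (∂_{be d i} (∂_{be d i} φ)) x := by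
    intro x
    rw [lap_sum, ← Finset.mul_sum]; ring
  simp_rw [this]
  rw [integral_sub I1 (integrable_finsetSum _ fun i _ => I2 i), integral_add I1 (integrable_finsetSum _ fun i _ => I3 i),
    integral_finsetSum _ fun i _ => I2 i, integral_finsetSum _ fun i _ => I3 i, sub_eq_add_neg, ← Finset.sum_neg_distrib]
  congr 1
  refine Finset.sum_congr rfl fun i _ => ?_
  rw [SchwartzMap.integral_mul_lineDerivOp_right_eq_neg_left, neg_neg]
  simp_rw [sq]

theorem stress_identity {d : ℕ} {v : Eu d → Eu d} (hv : ContDiff ℝ 1 v) {L : ℝ}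
    (hL : ∀ x, ‖fderiv ℝ v x‖ ≤ L) (l : ℝ) (φ : 𝓢(Eu d, ℝ)) :
    ∫ x, (l * φ x - (Δ φ) x) * (∑ i, v x i * (∂_{be d i} φ) x) =
      ∫ x, ∑ i, (-(l / 2) * ((fderiv ℝ v x (be d i)) i * φ x ^ 2) +
        ∑ j, ((fderiv ℝ v x (be d j)) i * ((∂_{be d j} φ) x * (∂_{be d i} φ) x)
          - 1 / 2 * ((fderiv ℝ v x (be d i)) i * (∂_{be d j} φ) x ^ 2))) := by
  have e1 : ∀ x, (l * φ x - (Δ φ) x) * (∑ i, v x i * (∂_{be d i} φ) x) =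
      ∑ i, (l / 2 * (v x i * (∂_{be d i} (smul2 φ φ)) x) +
        ∑ j, (1 / 2 * (v x i * (∂_{be d i} (smul2 (∂_{be d j} φ) (∂_{be d j} φ))) x)
          - v x i * (∂_{be d j} (smul2 (∂_{be d j} φ) (∂_{be d i} φ))) x)) := by
    intro x
    rw [lap_sum, Finset.mul_sum]
    refine Finset.sum_congr rfl fun i _ => ?_
    rw [sub_mul, Finset.sum_mul, sub_eq_add_neg, ← Finset.sum_neg_distrib]
    congr 1
    · rw [d_smul2]; ring
    · refine Finset.sum_congr rfl fun j _ => ?_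
      rw [d_smul2, d_smul2, d_comm φ (be d j) (be d i)]; ring
  simp_rw [e1]
  have J1 := fun g : 𝓢(Eu d, ℝ) => fun i => integrable_v_mul hv hL g i
  have J2 := fun g : 𝓢(Eu d, ℝ) => fun i j => integrable_dv_mul hv hL g i j
  have J3 : ∀ i j, Integrable fun x => (fderiv ℝ v x (be d j)) i * φ x ^ 2 := fun i j => by
    simpa [smul2_apply, sq] using J2 (smul2 φ φ) i j
  have J4 : ∀ i j k, Integrable fun x => (fderiv ℝ v x (be d j)) i * (∂_{be d k} φ) x ^ 2 := fun i j k => by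
    simpa [smul2_apply, sq] using J2 (smul2 (∂_{be d k} φ) (∂_{be d k} φ)) i j
  have J5 : ∀ i j k m, Integrable fun x => (fderiv ℝ v x (be d j)) i * ((∂_{be d k} φ) x * (∂_{be d m} φ) x) := fun i j k m =>
    J2 (smul2 (∂_{be d k} φ) (∂_{be d m} φ)) i j
  rw [integral_finsetSum, integral_finsetSum]
  · refine Finset.sum_congr rfl fun i _ => ?_
    rw [integral_add, integral_add, integral_const_mul, integral_const_mul, ibp_v hv hL, integral_finsetSum, integral_finsetSum]
    · congr 1
      · simp_rw [smul2_apply, sq]; ring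
      · refine Finset.sum_congr rfl fun j _ => ?_
        rw [integral_sub, integral_sub, integral_const_mul, integral_const_mul, ibp_v hv hL, ibp_v hv hL]
        · simp_rw [smul2_apply, sq]; ring
        · exact J5 _ _ _ _
        · exact (J4 _ _ _).const_mul _
        · exact (J1 _ _).const_mul _
        · exact J1 _ _
    · exact fun j _ => (J5 _ _ _ _).sub ((J4 _ _ _).const_mul _)
    · exact fun j _ => ((J1 _ _).const_mul _).sub (J1 _ _)
    · exact (J3 _ _).const_mul _
    · exact integrable_finsetSum _ fun j _ => (J5 _ _ _ _).sub ((J4 _ _ _).const_mul _)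
    · exact (J1 _ _).const_mul _
    · exact integrable_finsetSum _ fun j _ => ((J1 _ _).const_mul _).sub (J1 _ _)
  · exact fun i _ => ((J3 _ _).const_mul _).add (integrable_finsetSum _ fun j _ => (J5 _ _ _ _).sub ((J4 _ _ _).const_mul _))
  · exact fun i _ => ((J1 _ _).const_mul _).add (integrable_finsetSum _ fun j _ => ((J1 _ _).const_mul _).sub (J1 _ _))

theorem stress_pointwise {d : ℕ} (D : Eu d →L[ℝ] Eu d) {L : ℝ} (hL : ‖D‖ ≤ L) (l : ℝ) (hl : 0 ≤ l) (a : ℝ) (p : Fin d → ℝ) :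
    ∑ i, (-(l / 2) * ((D (be d i)) i * a ^ 2) +
        ∑ j, ((D (be d j)) i * (p j * p i) - 1 / 2 * ((D (be d i)) i * p j ^ 2)))
      ≤ ((d : ℝ) / 2 + 1) * L * (l * a ^ 2 + ∑ i, p i ^ 2) := by
  set P : Eu d := WithLp.toLp 2 p with hP
  have hPs : P = ∑ j, p j • be d j := by
    ext i
    simp [hP, be, Finset.sum_apply, Pi.single_apply]
  have e1 : ∑ i, ∑ j, (D (be d j)) i * (p j * p i) = ⟪D P, P⟫ := by
    rw [PiLp.inner_apply]
    refine Finset.sum_congr rfl fun i _ => ?_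
    rw [hPs, map_sum]
    simp only [map_smul, RCLike.inner_apply, conj_trivial]
    rw [← hPs]
    simp only [hP, WithLp.ofLp_sum, WithLp.ofLp_smul, Finset.sum_apply, Pi.smul_apply, smul_eq_mul, Finset.mul_sum]
    refine Finset.sum_congr rfl fun j _ => ?_
    ring
  have e2 : ∑ i, p i ^ 2 = ‖P‖ ^ 2 := by
    rw [EuclideanSpace.norm_sq_eq]; simp [hP]
  have e3 : ∑ i, (-(l / 2) * ((D (be d i)) i * a ^ 2) +
        ∑ j, ((D (be d j)) i * (p j * p i) - 1 / 2 * ((D (be d i)) i * p j ^ 2)))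
      = ⟪D P, P⟫ + (∑ i, -(D (be d i)) i) * ((l * a ^ 2 + ‖P‖ ^ 2) / 2) := by
    rw [← e1, ← e2, Finset.sum_mul, ← Finset.sum_add_distrib]
    refine Finset.sum_congr rfl fun i _ => ?_
    rw [Finset.sum_sub_distrib, ← Finset.mul_sum, ← Finset.mul_sum]
    ring
  rw [e3, e2]
  have b1 : ⟪D P, P⟫ ≤ L * ‖P‖ ^ 2 := by
    refine (real_inner_le_norm _ _).trans ?_
    have := (D.le_opNorm P).trans (mul_le_mul_of_nonneg_right hL (norm_nonneg P))
    nlinarith [norm_nonneg P]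
  have b2 : (∑ i, -(D (be d i)) i) ≤ d * L := by
    have : ∀ i ∈ Finset.univ, -(D (be d i)) i ≤ L := by
      intro i _
      refine (neg_le_abs _).trans ((PiLp.norm_apply_le (D (be d i)) i).trans ((D.le_opNorm _).trans ?_))
      rw [norm_be, mul_one]; exact hL
    simpa using Finset.sum_le_card_nsmul _ _ _ this
  have hL0 : 0 ≤ L := (norm_nonneg _).trans hL
  have b3 : 0 ≤ L * (l * a ^ 2) := by positivity
  have b4 : 0 ≤ (l * a ^ 2 + ‖P‖ ^ 2) / 2 := by positivity
  nlinarith [mul_le_mul_of_nonneg_right b2 b4]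

theorem yukawa_commutator {d : ℕ} {v : Eu d → Eu d} (hv : ContDiff ℝ 1 v) {L : ℝ}
    (hL : ∀ x, ‖fderiv ℝ v x‖ ≤ L) (l : ℝ) (hl : 0 < l) (C : ℝ) (hC : ((d : ℝ) / 2 + 1) * L ≤ C)
    (φ f : 𝓢(Eu d, ℝ)) (hf : l • φ - Δ φ = f) :
    0 ≤ C * (∫ x, f x * φ x) - ∫ x, f x * (∑ i, v x i * (∂_{be d i} φ) x) := by
  have hx : ∀ x, f x = l * φ x - (Δ φ) x := by intro x; rw [← hf]; simp
  simp_rw [hx]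
  rw [energy_identity, stress_identity hv hL, sub_nonneg, ← integral_const_mul]
  have I1 : Integrable (fun x => l * φ x ^ 2) := by
    simpa [smul2_apply, sq] using (smul2 φ φ).integrable.const_mul l
  have I3 : ∀ i, Integrable (fun x => (∂_{be d i} φ) x ^ 2) := fun i => by
    simp_rw [sq]
    exact (smul2 (∂_{be d i} φ) (∂_{be d i} φ)).integrable
  have J2 := fun g : 𝓢(Eu d, ℝ) => fun i j => integrable_dv_mul hv hL g i j
  have J3 : ∀ i j, Integrable fun x => (fderiv ℝ v x (be d j)) i * φ x ^ 2 := fun i j => by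
    simpa [smul2_apply, sq] using J2 (smul2 φ φ) i j
  have J4 : ∀ i j k, Integrable fun x => (fderiv ℝ v x (be d j)) i * (∂_{be d k} φ) x ^ 2 := fun i j k => by
    simpa [smul2_apply, sq] using J2 (smul2 (∂_{be d k} φ) (∂_{be d k} φ)) i j
  have J5 : ∀ i j k m, Integrable fun x => (fderiv ℝ v x (be d j)) i * ((∂_{be d k} φ) x * (∂_{be d m} φ) x) := fun i j k m =>
    J2 (smul2 (∂_{be d k} φ) (∂_{be d m} φ)) i j
  have K1 : Integrable (fun x => ∑ i, (-(l / 2) * ((fderiv ℝ v x (be d i)) i * φ x ^ 2) +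
        ∑ j, ((fderiv ℝ v x (be d j)) i * ((∂_{be d j} φ) x * (∂_{be d i} φ) x)
          - 1 / 2 * ((fderiv ℝ v x (be d i)) i * (∂_{be d j} φ) x ^ 2)))) :=
    integrable_finsetSum _ fun i _ => ((J3 _ _).const_mul _).add
      (integrable_finsetSum _ fun j _ => (J5 _ _ _ _).sub ((J4 _ _ _).const_mul _))
  have K2 : Integrable (fun x => C * (l * φ x ^ 2 + ∑ i, (∂_{be d i} φ) x ^ 2)) :=
    (I1.add (integrable_finsetSum _ fun i _ => I3 i)).const_mul C
  have K3 : ∀ x, ∑ i, (-(l / 2) * ((fderiv ℝ v x (be d i)) i * φ x ^ 2) +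
        ∑ j, ((fderiv ℝ v x (be d j)) i * ((∂_{be d j} φ) x * (∂_{be d i} φ) x)
          - 1 / 2 * ((fderiv ℝ v x (be d i)) i * (∂_{be d j} φ) x ^ 2)))
      ≤ C * (l * φ x ^ 2 + ∑ i, (∂_{be d i} φ) x ^ 2) := by
    intro x
    have h := stress_pointwise (fderiv ℝ v x) (hL x) l hl.le (φ x) (fun i => (∂_{be d i} φ) x)
    have h2 : 0 ≤ l * φ x ^ 2 + ∑ i, (∂_{be d i} φ) x ^ 2 := by positivity
    exact h.trans (mul_le_mul_of_nonneg_right hC h2)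
  exact integral_mono K1 K2 K3

theorem laplace_pos {α : ℝ} (hα : α ∈ Set.Ioc (0 : ℝ) 1) (F : ℝ → ℝ)
    (hF : IntegrableOn (fun t => t ^ (α - 1) * F t) (Set.Ioi 0))
    (h : ∀ l : ℝ, 0 < l → 0 ≤ ∫ t in Set.Ioi (0 : ℝ), exp (-(l * t)) * F t) :
    0 ≤ ∫ t in Set.Ioi (0 : ℝ), t ^ (α - 1) * F t := by
  have hFm : AEStronglyMeasurable F (volume.restrict (Set.Ioi 0)) := by
    have h1 : AEStronglyMeasurable (fun t : ℝ => t ^ (1 - α) * (t ^ (α - 1) * F t)) (volume.restrict (Set.Ioi 0)) := by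
      refine AEStronglyMeasurable.mul ?_ hF.aestronglyMeasurable
      exact (measurable_id.pow_const _).aestronglyMeasurable
    refine h1.congr ?_
    filter_upwards [ae_restrict_mem measurableSet_Ioi] with t ht
    have ht : 0 < t := ht
    rw [← mul_assoc, ← rpow_add ht]; simp
  rcases hα.2.lt_or_eq with h1 | h1
  · have hΓ : 0 < Gamma (1 - α) := Gamma_pos_of_pos (by linarith)
    set μ := volume.restrict (Set.Ioi (0 : ℝ)) with hμ
    have key : ∀ t : ℝ, 0 < t → ∫ l, l ^ (-α) * exp (-(l * t)) ∂μ = t ^ (α - 1) * Gamma (1 - α) := by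
      intro t ht
      have := Real.integral_rpow_mul_exp_neg_mul_Ioi (a := 1 - α) (r := t) (by linarith) ht
      rw [one_div, inv_rpow ht.le, ← rpow_neg ht.le] at this
      rw [show -(1 - α) = α - 1 by ring, show 1 - α - 1 = -α by ring] at this
      rw [← this]
      simp_rw [mul_comm t]
      rfl
    have keyI : ∀ t : ℝ, 0 < t → Integrable (fun l => l ^ (-α) * exp (-(l * t))) μ := by
      intro t ht
      by_contra hc
      have := key t ht
      rw [integral_undef hc] at this
      have : 0 < t ^ (α - 1) * Gamma (1 - α) := by positivity
      linarith
    have hI : Integrable (fun p : ℝ × ℝ => p.2 ^ (-α) * exp (-(p.2 * p.1)) * F p.1) (μ.prod μ) := by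
      have hm : AEStronglyMeasurable (fun p : ℝ × ℝ => p.2 ^ (-α) * exp (-(p.2 * p.1)) * F p.1) (μ.prod μ) := by
        refine AEStronglyMeasurable.mul ?_ hFm.comp_fst
        exact ((measurable_snd.pow_const _).mul (by fun_prop)).aestronglyMeasurable
      rw [integrable_prod_iff hm]
      constructor
      · filter_upwards [ae_restrict_mem measurableSet_Ioi] with t ht
        exact (keyI t ht).mul_const _
      · refine (hF.norm.const_mul (Gamma (1 - α))).congr ?_
        filter_upwards [ae_restrict_mem measurableSet_Ioi] with t ht
        have ht : 0 < t := ht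
        have : ∀ l ∈ Set.Ioi (0 : ℝ), ‖l ^ (-α) * exp (-(l * t)) * F t‖ = l ^ (-α) * exp (-(l * t)) * ‖F t‖ := by
          intro l hl
          have hl : 0 < l := hl
          rw [norm_mul, Real.norm_of_nonneg (by positivity)]
        rw [setIntegral_congr_fun measurableSet_Ioi this, integral_mul_const, key t ht, norm_mul,
          Real.norm_of_nonneg (by positivity : 0 ≤ t ^ (α - 1))]
        ring
    have hsw := integral_integral_swap (f := fun t l => l ^ (-α) * exp (-(l * t)) * F t) hI
    have e1 : ∫ t, ∫ l, l ^ (-α) * exp (-(l * t)) * F t ∂μ ∂μ = Gamma (1 - α) * ∫ t, t ^ (α - 1) * F t ∂μ := by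
      rw [← integral_const_mul]
      refine setIntegral_congr_fun measurableSet_Ioi fun t ht => ?_
      beta_reduce
      rw [integral_mul_const, key t ht]; ring
    have e2 : 0 ≤ ∫ l, ∫ t, l ^ (-α) * exp (-(l * t)) * F t ∂μ ∂μ := by
      refine setIntegral_nonneg measurableSet_Ioi fun l hl => ?_
      have hl : 0 < l := hl
      simp_rw [mul_assoc]
      rw [integral_const_mul]
      exact mul_nonneg (by positivity) (h l hl)
    rw [← hsw, e1] at e2
    exact nonneg_of_mul_nonneg_right e2 hΓ
  · subst h1
    simp only [sub_self, rpow_zero, one_mul] at hF ⊢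
    have hlim : Filter.Tendsto (fun k : ℕ => ∫ t in Set.Ioi (0 : ℝ), exp (-((1 / ((k : ℝ) + 1)) * t)) * F t)
        Filter.atTop (nhds (∫ t in Set.Ioi (0 : ℝ), F t)) := by
      refine tendsto_integral_of_dominated_convergence (fun t => ‖F t‖) ?_ hF.norm ?_ ?_
      · intro k
        refine AEStronglyMeasurable.mul ?_ hFm
        fun_prop
      · intro k
        filter_upwards [ae_restrict_mem measurableSet_Ioi] with t ht
        have ht : 0 < t := ht
        rw [norm_mul, Real.norm_of_nonneg (exp_pos _).le]
        refine mul_le_of_le_one_left (norm_nonneg _) (exp_le_one_iff.2 ?_)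
        rw [neg_nonpos]; positivity
      · filter_upwards with t
        have h0 := tendsto_one_div_add_atTop_nhds_zero_nat (𝕜 := ℝ)
        have h2 : Filter.Tendsto (fun k : ℕ => exp (-((1 / ((k : ℝ) + 1)) * t)) * F t) Filter.atTop (nhds (exp (-(0 * t)) * F t)) := by
          refine Filter.Tendsto.mul_const _ ?_
          exact (continuous_exp.tendsto _).comp ((h0.mul_const t).neg)
        simpa using h2
    exact ge_of_tendsto' hlim fun k => h _ (by positivity)

theorem kernel_locInt {d : ℕ} (hd : 1 ≤ d) {α : ℝ} (hα : 0 < α) :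
    LocallyIntegrable (fun z : Eu d => ‖z‖ ^ (2 * α - d)) := by
  refine locallyIntegrable_of_norm_le_rpow (C := 1) (α := d - 2 * α) (by simpa using hd) (by simp [hα]) ?_ ?_
  · filter_upwards with x
    rw [Real.norm_of_nonneg (by positivity), one_mul, neg_sub]
  · exact (measurable_norm.pow_const _).aestronglyMeasurable

theorem kernel_int {d : ℕ} (hd : 1 ≤ d) {α : ℝ} (hα : 0 < α) {R M : ℝ} {g : Eu d × Eu d → ℝ}
    (hg : AEStronglyMeasurable g) (hM : ∀ p, ‖g p‖ ≤ M)
    (h0 : ∀ p : Eu d × Eu d, (R < ‖p.1‖ ∨ R < ‖p.2‖) → g p = 0) :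
    Integrable (fun p : Eu d × Eu d => ‖p.1 - p.2‖ ^ (2 * α - d) * g p) := by
  have hK : Integrable ((Metric.closedBall (0 : Eu d) (2 * R)).indicator (fun z : Eu d => ‖z‖ ^ (2 * α - d))) := by
    rw [integrable_indicator_iff measurableSet_closedBall]
    exact (kernel_locInt hd hα).integrableOn_isCompact (isCompact_closedBall _ _)
  have h1 : Integrable ((Metric.closedBall (0 : Eu d) R).indicator (fun _ => (1 : ℝ))) := by
    rw [integrable_indicator_iff measurableSet_closedBall]
    exact integrableOn_const (isCompact_closedBall _ _).measure_lt_top.ne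
  have h2 := (h1.convolution_integrand (ContinuousLinearMap.mul ℝ ℝ) hK).const_mul M
  refine Integrable.mono' h2 ?_ ?_
  · refine AEStronglyMeasurable.mul ?_ hg
    exact ((measurable_fst.sub measurable_snd).norm.pow_const _).aestronglyMeasurable
  · filter_upwards with p
    by_cases hp : R < ‖p.1‖ ∨ R < ‖p.2‖
    · rw [h0 p hp]
      have hM0 : 0 ≤ M := (norm_nonneg _).trans (hM p)
      simp only [mul_zero, norm_zero, ContinuousLinearMap.mul_apply']
      refine mul_nonneg hM0 (mul_nonneg (Set.indicator_nonneg (fun _ _ => by norm_num) _) (Set.indicator_nonneg (fun _ _ => by positivity) _))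
    · push Not at hp
      rw [ContinuousLinearMap.mul_apply', Set.indicator_of_mem (by simpa using hp.2), Set.indicator_of_mem, norm_mul,
        Real.norm_of_nonneg (by positivity), one_mul, mul_comm]
      · gcongr
        exact hM p
      · rw [mem_closedBall_zero_iff]
        exact (norm_sub_le _ _).trans (by linarith [hp.1, hp.2])

noncomputable def kap (d : ℕ) (α : ℝ) : ℝ :=
  (4 * π) ^ (-((d : ℝ) / 2)) * (4 ^ ((d : ℝ) / 2 - α) * Gamma ((d : ℝ) / 2 - α))

theorem kap_pos {d : ℕ} {α : ℝ} (h2α : 2 * α < d) : 0 < kap d α := by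
  have := Gamma_pos_of_pos (s := (d : ℝ) / 2 - α) (by linarith)
  unfold kap
  positivity

theorem hk_superpos {d : ℕ} {α : ℝ} (h2α : 2 * α < d) (z : Eu d) (hz : z ≠ 0) :
    ∫ t in Set.Ioi (0 : ℝ), t ^ (α - 1) * hk d t z = kap d α * ‖z‖ ^ (2 * α - d) := by
  have hz' : 0 < ‖z‖ := norm_pos_iff.2 hz
  rw [← integral_comp_rpow_Ioi _ (p := -1) (by norm_num)]
  have h1 := Real.integral_rpow_mul_exp_neg_mul_Ioi (a := (d : ℝ) / 2 - α) (r := ‖z‖ ^ 2 / 4) (by linarith) (by positivity)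
  have h2 : ∀ s ∈ Set.Ioi (0 : ℝ), (|(-1 : ℝ)| * s ^ ((-1 : ℝ) - 1)) • ((s ^ (-1 : ℝ)) ^ (α - 1) * hk d (s ^ (-1 : ℝ)) z)
      = (4 * π) ^ (-((d : ℝ) / 2)) * (s ^ ((d : ℝ) / 2 - α - 1) * exp (-(‖z‖ ^ 2 / 4 * s))) := by
    intro s hs
    have hs : 0 < s := hs
    unfold hk
    rw [mul_rpow (by positivity) (by positivity), ← rpow_mul hs.le, ← rpow_mul hs.le]
    have : ‖z‖ ^ 2 / (4 * s ^ (-1 : ℝ)) = ‖z‖ ^ 2 / 4 * s := by rw [rpow_neg_one]; field_simp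
    rw [this, abs_neg, abs_one, one_mul, smul_eq_mul]
    have e : s ^ ((d : ℝ) / 2 - α - 1) = s ^ ((-1 : ℝ) - 1) * s ^ (-1 * (α - 1)) * s ^ (-1 * -((d : ℝ) / 2)) := by
      rw [← rpow_add hs, ← rpow_add hs]; congr 1; ring
    rw [e]; ring
  rw [setIntegral_congr_fun measurableSet_Ioi h2, integral_const_mul, h1, kap, mul_assoc]
  congr 1
  rw [one_div_div, div_rpow (by positivity) (by positivity), ← rpow_natCast, ← rpow_mul hz'.le]
  have : ‖z‖ ^ (2 * α - d) = (‖z‖ ^ (((2 : ℕ) : ℝ) * ((d : ℝ) / 2 - α)))⁻¹ := by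
    rw [← rpow_neg hz'.le]; congr 1; push_cast; ring
  rw [this]; ring

theorem hk_nonneg {d : ℕ} {t : ℝ} (ht : 0 ≤ t) (z : Eu d) : 0 ≤ hk d t z := by
  unfold hk; positivity

theorem hk_meas {d : ℕ} : Measurable (fun p : ℝ × Eu d => hk d p.1 p.2) := by
  unfold hk
  refine ((measurable_const.mul measurable_fst).pow_const _).mul ?_
  fun_prop

theorem hk_superpos_int {d : ℕ} {α : ℝ} (h2α : 2 * α < d) (z : Eu d) (hz : z ≠ 0) :
    IntegrableOn (fun t => t ^ (α - 1) * hk d t z) (Set.Ioi 0) := by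
  by_contra hc
  have := hk_superpos h2α z hz
  rw [integral_undef hc] at this
  have h1 := kap_pos h2α
  have : 0 < kap d α * ‖z‖ ^ (2 * α - d) := by positivity
  linarith

theorem ae_off_diag {d : ℕ} (hd : 1 ≤ d) : ∀ᵐ p : Eu d × Eu d, p.1 - p.2 ≠ 0 := by
  have : Nontrivial (Eu d) := by
    apply Module.nontrivial_of_finrank_pos (R := ℝ)
    simp; omega
  have h := quasiMeasurePreserving_sub_of_right_invariant (volume : Measure (Eu d)) (volume : Measure (Eu d))
  have h0 : ∀ᵐ z : Eu d, z ≠ 0 := by simp [ae_iff]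
  exact h.ae h0

theorem heat_superposition {d : ℕ} (hd : 1 ≤ d) {α : ℝ} (hα : 0 < α) (h2α : 2 * α < d) {R M : ℝ} {g : Eu d × Eu d → ℝ}
    (hg : AEStronglyMeasurable g) (hM : ∀ p, ‖g p‖ ≤ M)
    (h0 : ∀ p : Eu d × Eu d, (R < ‖p.1‖ ∨ R < ‖p.2‖) → g p = 0) :
    IntegrableOn (fun t => t ^ (α - 1) * ∫ p : Eu d × Eu d, hk d t (p.1 - p.2) * g p) (Set.Ioi 0) ∧
    ∫ t in Set.Ioi (0 : ℝ), t ^ (α - 1) * ∫ p : Eu d × Eu d, hk d t (p.1 - p.2) * g p =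
      kap d α * ∫ p : Eu d × Eu d, ‖p.1 - p.2‖ ^ (2 * α - d) * g p := by
  set μ := volume.restrict (Set.Ioi (0 : ℝ)) with hμ
  have hI : Integrable (fun q : ℝ × (Eu d × Eu d) => q.1 ^ (α - 1) * hk d q.1 (q.2.1 - q.2.2) * g q.2) (μ.prod volume) := by
    have hm : AEStronglyMeasurable (fun q : ℝ × (Eu d × Eu d) => q.1 ^ (α - 1) * hk d q.1 (q.2.1 - q.2.2) * g q.2) (μ.prod volume) := by
      refine AEStronglyMeasurable.mul ?_ hg.comp_snd
      refine ((measurable_fst.pow_const _).mul ?_).aestronglyMeasurable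
      exact hk_meas.comp (f := fun q : ℝ × (Eu d × Eu d) => (q.1, q.2.1 - q.2.2)) (by fun_prop)
    rw [integrable_prod_iff' hm]
    constructor
    · filter_upwards [ae_off_diag hd] with p hp
      exact (hk_superpos_int h2α _ hp).mul_const _
    · refine (((kernel_int hd hα hg hM h0).norm).const_mul (kap d α)).congr ?_
      filter_upwards [ae_off_diag hd] with p hp
      have : ∀ t ∈ Set.Ioi (0 : ℝ), ‖t ^ (α - 1) * hk d t (p.1 - p.2) * g p‖ = t ^ (α - 1) * hk d t (p.1 - p.2) * ‖g p‖ := by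
        intro t ht
        have ht : 0 < t := ht
        rw [norm_mul, Real.norm_of_nonneg]
        exact mul_nonneg (by positivity) (hk_nonneg ht.le _)
      rw [setIntegral_congr_fun measurableSet_Ioi this, integral_mul_const, hk_superpos h2α _ hp, norm_mul,
        Real.norm_of_nonneg (by positivity : 0 ≤ ‖p.1 - p.2‖ ^ (2 * α - (d : ℝ)))]
      ring
  have e : ∀ t : ℝ, t ^ (α - 1) * ∫ p : Eu d × Eu d, hk d t (p.1 - p.2) * g p
      = ∫ p : Eu d × Eu d, t ^ (α - 1) * hk d t (p.1 - p.2) * g p := by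
    intro t
    rw [← integral_const_mul]; simp_rw [mul_assoc]
  simp_rw [e]
  refine ⟨hI.integral_prod_left, ?_⟩
  rw [integral_integral_swap (f := fun t p => t ^ (α - 1) * hk d t (p.1 - p.2) * g p) hI, ← integral_const_mul]
  refine integral_congr_ae ?_
  filter_upwards [ae_off_diag hd] with p hp
  rw [integral_mul_const, hk_superpos h2α _ hp]; ring

theorem hk_integral {d : ℕ} {t : ℝ} (ht : 0 < t) : ∫ z, hk d t z = 1 := by
  unfold hk
  rw [integral_const_mul]
  have := GaussianFourier.integral_rexp_neg_mul_sq_norm (V := Eu d) (b := 1 / (4 * t)) (by positivity)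
  have e : ∀ z : Eu d, exp (-(‖z‖ ^ 2 / (4 * t))) = exp (-(1 / (4 * t)) * ‖z‖ ^ 2) := by
    intro z; congr 1; ring
  simp_rw [e]
  rw [this, finrank_euclideanSpace_fin, div_div_eq_mul_div, div_one, show π * (4 * t) = 4 * π * t by ring,
    ← rpow_add (by positivity)]
  simp

theorem hk_integrable {d : ℕ} {t : ℝ} (ht : 0 < t) : Integrable (hk d t) := by
  by_contra hc
  have := hk_integral (d := d) ht
  rw [integral_undef hc] at this
  norm_num at this

theorem hk_int_le {d : ℕ} {t : ℝ} (ht : 0 < t) {f : Eu d → ℝ} {M : ℝ} (hM : ∀ x, ‖f x‖ ≤ M) (x : Eu d) :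
    ‖∫ y, hk d t (x - y) * f y‖ ≤ M := by
  have h1 : ∫ y, M * hk d t (x - y) = M := by
    rw [integral_const_mul, integral_sub_left_eq_self (fun z => hk d t z), hk_integral ht, mul_one]
  rw [← h1]
  refine norm_integral_le_of_norm_le (((hk_integrable ht).comp_sub_left x).const_mul M) ?_
  filter_upwards with y
  rw [norm_mul, Real.norm_of_nonneg (hk_nonneg ht.le _), mul_comm]
  exact mul_le_mul_of_nonneg_right (hM y) (hk_nonneg ht.le _)

theorem laplace_pair {d : ℕ} {h : Eu d → ℝ} (hh : Integrable h) (l : ℝ) (hl : 0 < l)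
    (φ f : 𝓢(Eu d, ℝ)) (hφ : l • φ - Δ φ = f) :
    (∀ t, 0 < t → Integrable (fun p : Eu d × Eu d => hk d t (p.1 - p.2) * (h p.1 * f p.2))) ∧
    IntegrableOn (fun t => exp (-(l * t)) * ∫ p : Eu d × Eu d, hk d t (p.1 - p.2) * (h p.1 * f p.2)) (Set.Ioi 0) ∧
    ∫ t in Set.Ioi (0 : ℝ), exp (-(l * t)) * ∫ p : Eu d × Eu d, hk d t (p.1 - p.2) * (h p.1 * f p.2) =
      ∫ x, h x * φ x := by
  set μ := volume.restrict (Set.Ioi (0 : ℝ)) with hμ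
  obtain ⟨M, hM⟩ : ∃ M, ∀ x, ‖f x‖ ≤ M :=
    ⟨‖f.toBoundedContinuousFunction‖, fun x => f.toBoundedContinuousFunction.norm_coe_le_norm x⟩
  have I1 : ∀ t, 0 < t → Integrable (fun p : Eu d × Eu d => hk d t (p.1 - p.2) * (h p.1 * f p.2)) := by
    intro t ht
    have hgau := hk_integrable (d := d) ht
    have := hh.convolution_integrand (ContinuousLinearMap.mul ℝ ℝ) (hgau.comp_neg)
    have h2 := (this.swap).mul_bdd (c := M) (g := fun p : Eu d × Eu d => f p.2)
      (f.continuous.comp continuous_snd).aestronglyMeasurable (Filter.Eventually.of_forall fun p => hM p.2)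
    refine h2.congr (Filter.Eventually.of_forall fun p => ?_)
    simp only [Function.comp, Prod.fst_swap, Prod.snd_swap, ContinuousLinearMap.mul_apply', neg_sub]
    ring
  refine ⟨I1, ?_⟩
  have e : ∀ t ∈ Set.Ioi (0 : ℝ), exp (-(l * t)) * ∫ p : Eu d × Eu d, hk d t (p.1 - p.2) * (h p.1 * f p.2)
      = ∫ x, h x * (exp (-(l * t)) * ∫ y, hk d t (x - y) * f y) := by
    intro t ht
    have ht : 0 < t := ht
    rw [Measure.volume_eq_prod, integral_prod _ (I1 t ht), ← integral_const_mul]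
    congr with x
    rw [← integral_const_mul, ← integral_const_mul, ← integral_const_mul]
    congr with y
    ring
  have hI : Integrable (fun q : ℝ × Eu d => h q.2 * (exp (-(l * q.1)) * ∫ y, hk d q.1 (q.2 - y) * f y)) (μ.prod volume) := by
    have h0 : Integrable (fun t : ℝ => (Real.exp (-(l * t)))) μ := by
      have := integrableOn_exp_mul_Ioi (a := -l) (by linarith) 0
      simpa [IntegrableOn] using this
    refine ((h0.mul_prod hh.norm).const_mul M).mono' ?_ ?_
    · refine AEStronglyMeasurable.mul hh.aestronglyMeasurable.comp_snd (AEStronglyMeasurable.mul (by fun_prop) ?_)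
      have hm : Measurable (fun w : (ℝ × Eu d) × Eu d => hk d w.1.1 (w.1.2 - w.2) * f w.2) := by
        refine Measurable.mul ?_ (f.continuous.measurable.comp measurable_snd)
        exact hk_meas.comp (f := fun w : (ℝ × Eu d) × Eu d => (w.1.1, w.1.2 - w.2)) (by fun_prop)
      exact (hm.stronglyMeasurable.integral_prod_right (ν := volume)).aestronglyMeasurable
    · have hm : ∀ᵐ z : ℝ × Eu d ∂(μ.prod volume), 0 < z.1 := by
        have := Measure.quasiMeasurePreserving_fst (μ := μ) (ν := (volume : Measure (Eu d)))
        exact this.ae (ae_restrict_mem measurableSet_Ioi)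
      filter_upwards [hm] with z hz
      rw [norm_mul, norm_mul, Real.norm_of_nonneg (exp_pos _).le]
      have := hk_int_le hz hM z.2
      have h3 := mul_le_mul_of_nonneg_left this (by positivity : 0 ≤ ‖h z.2‖ * exp (-(l * z.1)))
      nlinarith
  constructor
  · refine (integrableOn_congr_fun e measurableSet_Ioi).2 ?_
    exact hI.integral_prod_left
  · rw [setIntegral_congr_fun measurableSet_Ioi e]
    rw [integral_integral_swap (f := fun t x => h x * (exp (-(l * t)) * ∫ y, hk d t (x - y) * f y)) hI]
    congr with x
    rw [integral_const_mul, heat_resolvent d l hl φ f hφ]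

theorem resolvent_deriv {d : ℕ} (l : ℝ) (φ f : 𝓢(Eu d, ℝ)) (hφ : l • φ - Δ φ = f) (i : Fin d) :
    l • (∂_{be d i} φ) - Δ (∂_{be d i} φ) = ∂_{be d i} f := by
  have hc : ∀ (g : 𝓢(Eu d, ℝ)) (m n : Eu d), (∂_{m} (∂_{n} g) : 𝓢(Eu d, ℝ)) = ∂_{n} (∂_{m} g) := fun g m n => by
    ext x; exact d_comm g m n x
  have hΔ : Δ (∂_{be d i} φ) = ∂_{be d i} (Δ φ) := by
    rw [SchwartzMap.laplacian_eq_sum (EuclideanSpace.basisFun (Fin d) ℝ),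
      SchwartzMap.laplacian_eq_sum (EuclideanSpace.basisFun (Fin d) ℝ), LineDeriv.lineDerivOp_sum]
    refine Finset.sum_congr rfl fun j _ => ?_
    rw [hc φ _ (be d i), hc _ _ (be d i)]
  rw [hΔ, ← hφ]
  have hs := map_sub (LineDeriv.lineDerivOpCLM ℝ 𝓢(Eu d, ℝ) (be d i)) (l • φ) (Δ φ)
  rw [map_smul] at hs
  exact hs.symm

theorem laplace_commutator {d : ℕ} {v : Eu d → Eu d} (hv : ContDiff ℝ 1 v) {L : ℝ}
    (hL : ∀ x, ‖fderiv ℝ v x‖ ≤ L) (l : ℝ) (hl : 0 < l) (C : ℝ) (hC : ((d : ℝ) / 2 + 1) * L ≤ C)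
    (f : 𝓢(Eu d, ℝ)) :
    0 ≤ ∫ t in Set.Ioi (0 : ℝ), exp (-(l * t)) * ∫ p : Eu d × Eu d, hk d t (p.1 - p.2) *
      (f p.1 * (C * f p.2 - ∑ i, v p.1 i * (∂_{be d i} f) p.2)) := by
  obtain ⟨φ, hφ⟩ := exists_resolvent d l hl f
  have hy := yukawa_commutator hv hL l hl C hC φ f hφ
  obtain ⟨a1, a2, a3⟩ := laplace_pair (f.integrable (μ := volume)) l hl φ f hφ
  have hb := fun i => laplace_pair (integrable_v_mul hv hL f i) l hl _ _ (resolvent_deriv l φ f hφ i)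
  have e : ∀ t ∈ Set.Ioi (0 : ℝ), exp (-(l * t)) * ∫ p : Eu d × Eu d, hk d t (p.1 - p.2) *
      (f p.1 * (C * f p.2 - ∑ i, v p.1 i * (∂_{be d i} f) p.2))
      = C * (exp (-(l * t)) * ∫ p : Eu d × Eu d, hk d t (p.1 - p.2) * (f p.1 * f p.2))
        - ∑ i, (exp (-(l * t)) * ∫ p : Eu d × Eu d, hk d t (p.1 - p.2) * ((v p.1 i * f p.1) * (∂_{be d i} f) p.2)) := by
    intro t ht
    have ht : 0 < t := ht
    have e1 : ∀ p : Eu d × Eu d, hk d t (p.1 - p.2) * (f p.1 * (C * f p.2 - ∑ i, v p.1 i * (∂_{be d i} f) p.2))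
      = C * (hk d t (p.1 - p.2) * (f p.1 * f p.2)) - ∑ i, hk d t (p.1 - p.2) * ((v p.1 i * f p.1) * (∂_{be d i} f) p.2) := by
      intro p
      rw [mul_sub, mul_sub, Finset.mul_sum, Finset.mul_sum]
      congr 1
      · ring
      · exact Finset.sum_congr rfl fun i _ => by ring
    simp_rw [e1]
    rw [integral_sub ((a1 t ht).const_mul C) (integrable_finsetSum _ fun i _ => (hb i).1 t ht), integral_const_mul,
      integral_finsetSum _ fun i _ => (hb i).1 t ht, mul_sub, Finset.mul_sum]
    ring
  rw [setIntegral_congr_fun measurableSet_Ioi e, integral_sub (a2.const_mul C) (integrable_finsetSum _ fun i _ => (hb i).2.1),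
    integral_const_mul, integral_finsetSum _ fun i _ => (hb i).2.1, a3]
  have e2 : ∫ x, f x * (∑ i, v x i * (∂_{be d i} φ) x) = ∑ i, ∫ x, v x i * f x * (∂_{be d i} φ) x := by
    rw [← integral_finsetSum]
    · congr with x
      rw [Finset.mul_sum]
      exact Finset.sum_congr rfl fun i _ => by ring
    · intro i _
      refine (integrable_v_mul hv hL (smul2 f (∂_{be d i} φ)) i).congr (Filter.Eventually.of_forall fun x => ?_)
      simp only [smul2_apply]; ring
  rw [e2] at hy
  simp_rw [(hb _).2.2]
  exact hy

theorem fderiv_zero_out {d : ℕ} {σ : Eu d → ℝ} {R : ℝ} (hR : ∀ x, R < ‖x‖ → σ x = 0) (x : Eu d) (hx : R < ‖x‖) :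
    fderiv ℝ σ x = 0 := by
  have : σ =ᶠ[nhds x] fun _ => 0 := by
    filter_upwards [(isOpen_lt continuous_const continuous_norm).mem_nhds hx] with y hy using hR y hy
  rw [this.fderiv_eq]; simp

/-- The commutator density. -/
noncomputable def gfun {d : ℕ} (v : Eu d → Eu d) (C : ℝ) (σ : Eu d → ℝ) (p : Eu d × Eu d) : ℝ :=
  σ p.1 * (C * σ p.2 - ∑ i, v p.1 i * fderiv ℝ σ p.2 (be d i))

theorem gfun_zero {d : ℕ} (v : Eu d → Eu d) (C : ℝ) {σ : Eu d → ℝ} {R : ℝ} (hR : ∀ x, R < ‖x‖ → σ x = 0)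
    (p : Eu d × Eu d) (hp : R < ‖p.1‖ ∨ R < ‖p.2‖) : gfun v C σ p = 0 := by
  unfold gfun
  rcases hp with hp | hp
  · rw [hR _ hp]; simp
  · rw [hR _ hp, fderiv_zero_out hR _ hp]; simp

theorem gfun_cont {d : ℕ} {v : Eu d → Eu d} (hv : Continuous v) (C : ℝ) {σ : Eu d → ℝ} (hσ : ContDiff ℝ 1 σ) :
    Continuous (gfun v C σ) := by
  unfold gfun
  have h1 := hσ.continuous
  have h2 := hσ.continuous_fderiv one_ne_zero
  fun_prop

theorem gfun_bound {d : ℕ} (v : Eu d → Eu d) (C : ℝ) {σ : Eu d → ℝ} {R M0 M1 V : ℝ} (hR : ∀ x, R < ‖x‖ → σ x = 0)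
    (hM0 : ∀ x, ‖σ x‖ ≤ M0) (hM1 : ∀ x, ‖fderiv ℝ σ x‖ ≤ M1) (hV : ∀ x, ‖x‖ ≤ R → ‖v x‖ ≤ V) (hV0 : 0 ≤ V)
    (p : Eu d × Eu d) : ‖gfun v C σ p‖ ≤ M0 * (|C| * M0 + d * (V * M1)) := by
  have a0 : 0 ≤ M0 := (norm_nonneg _).trans (hM0 0)
  have a1 : 0 ≤ M1 := (norm_nonneg _).trans (hM1 0)
  by_cases hp : R < ‖p.1‖
  · rw [gfun_zero v C hR p (Or.inl hp), norm_zero]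
    positivity
  · push Not at hp
    unfold gfun
    rw [norm_mul]
    refine mul_le_mul (hM0 _) ?_ (norm_nonneg _) a0
    refine (norm_sub_le _ _).trans (add_le_add ?_ ?_)
    · rw [norm_mul]
      exact mul_le_mul_of_nonneg_left (hM0 _) (abs_nonneg C)
    · refine (norm_sum_le _ _).trans ?_
      have : ∀ i ∈ Finset.univ, ‖v p.1 i * fderiv ℝ σ p.2 (be d i)‖ ≤ V * M1 := by
        intro i _
        rw [norm_mul]
        refine mul_le_mul ((PiLp.norm_apply_le _ i).trans (hV _ hp)) ?_ (norm_nonneg _) hV0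
        refine ((fderiv ℝ σ p.2).le_opNorm _).trans ?_
        rw [norm_be, mul_one]; exact hM1 _
      simpa using Finset.sum_le_card_nsmul _ _ _ this

theorem bound_exists {d : ℕ} {F : Type*} [NormedAddCommGroup F] {f : Eu d → F} (hf : Continuous f) (R : ℝ) :
    ∃ M, 0 ≤ M ∧ ∀ x, ‖x‖ ≤ R → ‖f x‖ ≤ M := by
  obtain ⟨M, hM⟩ := (isCompact_closedBall (0 : Eu d) R).exists_bound_of_continuousOn hf.continuousOn
  exact ⟨max M 0, le_max_right _ _, fun x hx => (hM x (by simpa using hx)).trans (le_max_left _ _)⟩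

theorem bound_exists' {d : ℕ} {F : Type*} [NormedAddCommGroup F] {f : Eu d → F} (hf : Continuous f) {R : ℝ}
    (hR : ∀ x, R < ‖x‖ → f x = 0) : ∃ M, ∀ x, ‖f x‖ ≤ M := by
  obtain ⟨M, h0, hM⟩ := bound_exists hf R
  refine ⟨M, fun x => ?_⟩
  by_cases hx : R < ‖x‖
  · rw [hR x hx, norm_zero]; exact h0
  · exact hM x (not_lt.1 hx)

theorem main_smooth {d : ℕ} (hd : 1 ≤ d) {α : ℝ} (hα : α ∈ Set.Ioc (0 : ℝ) 1) (h2α : 2 * α < d)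
    {v : Eu d → Eu d} (hv : ContDiff ℝ 1 v) {L : ℝ}
    (hL : ∀ x, ‖fderiv ℝ v x‖ ≤ L) (C : ℝ) (hC : ((d : ℝ) / 2 + 1) * L ≤ C)
    {σ : Eu d → ℝ} (hσ : ContDiff ℝ ((⊤ : ℕ∞) : WithTop ℕ∞) σ) {R : ℝ} (hR : ∀ x, R < ‖x‖ → σ x = 0) :
    0 ≤ ∫ p : Eu d × Eu d, ‖p.1 - p.2‖ ^ (2 * α - d) * gfun v C σ p := by
  have hσ1 : ContDiff ℝ 1 σ := hσ.of_le (by exact_mod_cast le_top)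
  have hc : HasCompactSupport σ := HasCompactSupport.intro (isCompact_closedBall (0 : Eu d) R) fun x hx => hR x (by simpa using hx)
  set f : 𝓢(Eu d, ℝ) := hc.toSchwartzMap hσ with hf
  obtain ⟨M0, hM0⟩ := bound_exists' hσ1.continuous hR
  obtain ⟨M1, hM1⟩ := bound_exists' (hσ1.continuous_fderiv one_ne_zero) (fderiv_zero_out hR)
  obtain ⟨V, hV0, hV⟩ := bound_exists hv.continuous R
  obtain ⟨s1, s2⟩ := heat_superposition hd hα.1 h2α (gfun_cont hv.continuous C hσ1).aestronglyMeasurable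
    (gfun_bound v C hR hM0 hM1 hV hV0) (gfun_zero v C hR)
  have hpos := laplace_pos hα _ s1 (fun l hl => laplace_commutator hv hL l hl C hC f)
  rw [s2] at hpos
  exact nonneg_of_mul_nonneg_right hpos (kap_pos h2α)

/-- Shrinking bumps. -/
noncomputable def bmp (d : ℕ) (k : ℕ) : ContDiffBump (0 : Eu d) :=
  ⟨1 / (2 * ((k : ℝ) + 1)), 1 / ((k : ℝ) + 1), by positivity, by
    apply one_div_lt_one_div_of_lt (by positivity)
    have : (0 : ℝ) < k + 1 := by positivity
    linarith⟩

/-- Mollification. -/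
noncomputable def moll {d : ℕ} {F : Type*} [NormedAddCommGroup F] [NormedSpace ℝ F] (σ : Eu d → F) (k : ℕ) : Eu d → F :=
  MeasureTheory.convolution ((bmp d k).normed volume) σ (ContinuousLinearMap.lsmul ℝ ℝ) volume

theorem bmp_le (d k : ℕ) : (bmp d k).rOut ≤ 1 := by
  show 1 / ((k : ℝ) + 1) ≤ 1
  rw [div_le_one (by positivity)]
  have : (0 : ℝ) ≤ k := by positivity
  linarith

theorem moll_tendsto {d : ℕ} {F : Type*} [NormedAddCommGroup F] [NormedSpace ℝ F] [CompleteSpace F] {σ : Eu d → F} (hσ : Continuous σ) (x : Eu d) :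
    Filter.Tendsto (fun k => moll σ k x) Filter.atTop (nhds (σ x)) :=
  ContDiffBump.convolution_tendsto_right_of_continuous (φ := fun k => bmp d k)
    (tendsto_one_div_add_atTop_nhds_zero_nat (𝕜 := ℝ)) hσ x

theorem moll_bound {d : ℕ} {F : Type*} [NormedAddCommGroup F] [NormedSpace ℝ F] [CompleteSpace F] {σ : Eu d → F} (hσ : Continuous σ)
    {M : ℝ} (hM : ∀ x, ‖σ x‖ ≤ M) (k : ℕ) (x : Eu d) : ‖moll σ k x‖ ≤ 3 * M := by
  have h := (bmp d k).dist_normed_convolution_le (μ := volume) (x₀ := x) (ε := 2 * M) hσ.aestronglyMeasurable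
    (fun y _ => by
      rw [dist_eq_norm]
      refine (norm_sub_le _ _).trans ?_
      linarith [hM x, hM y])
  rw [dist_eq_norm] at h
  have h2 := norm_le_norm_add_norm_sub' (moll σ k x) (σ x)
  have h3 := hM x
  change ‖moll σ k x - σ x‖ ≤ _ at h
  linarith

theorem moll_zero {d : ℕ} {F : Type*} [NormedAddCommGroup F] [NormedSpace ℝ F] [CompleteSpace F] {σ : Eu d → F}
    {R : ℝ} (hR : ∀ x, R < ‖x‖ → σ x = 0) (k : ℕ) (x : Eu d) (hx : R + 1 < ‖x‖) : moll σ k x = 0 := by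
  have h := (bmp d k).normed_convolution_eq_right (μ := volume) (g := σ) (x₀ := x) (fun y hy => by
    rw [hR x (by linarith), hR y]
    have h1 : dist y x < 1 := lt_of_lt_of_le hy (bmp_le d k)
    rw [dist_eq_norm] at h1
    have h2 := norm_sub_norm_le x y
    rw [norm_sub_rev] at h2
    linarith)
  rw [hR x (by linarith)] at h
  exact h

theorem moll_smooth {d : ℕ} {σ : Eu d → ℝ} (hσ : Continuous σ) (k : ℕ) : ContDiff ℝ ((⊤ : ℕ∞) : WithTop ℕ∞) (moll σ k) :=
  (bmp d k).hasCompactSupport_normed.contDiff_convolution_left _ (bmp d k).contDiff_normed hσ.locallyIntegrable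

theorem precompR_mul {d : ℕ} (f : Eu d → ℝ) (g : Eu d → (Eu d →L[ℝ] ℝ)) (L : ℝ →L[ℝ] ℝ →L[ℝ] ℝ)
    (hL : ∀ a b, L a b = a * b) (x : Eu d) :
    MeasureTheory.convolution f g (L.precompR (Eu d)) volume x =
      ∫ y, f y • g (x - y) := by
  unfold MeasureTheory.convolution
  congr with y
  congr 1
  ext w
  simp [hL]

theorem moll_fderiv {d : ℕ} {σ : Eu d → ℝ} (hσ : ContDiff ℝ 1 σ) (hc : HasCompactSupport σ) (k : ℕ) (x : Eu d) :
    fderiv ℝ (moll σ k) x = moll (fderiv ℝ σ) k x := by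
  have h := (hc.hasFDerivAt_convolution_right (ContinuousLinearMap.lsmul ℝ ℝ) (f := (bmp d k).normed volume)
    (μ := volume) (bmp d k).continuous_normed.locallyIntegrable hσ x).fderiv
  refine h.trans ?_
  rw [precompR_mul _ _ _ (by simp)]
  rfl

theorem main_C1 {d : ℕ} (hd : 1 ≤ d) {α : ℝ} (hα : α ∈ Set.Ioc (0 : ℝ) 1) (h2α : 2 * α < d)
    {v : Eu d → Eu d} (hv : ContDiff ℝ 1 v) {L : ℝ}
    (hL : ∀ x, ‖fderiv ℝ v x‖ ≤ L) (C : ℝ) (hC : ((d : ℝ) / 2 + 1) * L ≤ C)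
    {σ : Eu d → ℝ} (hσ : ContDiff ℝ 1 σ) {R : ℝ} (hR : ∀ x, R < ‖x‖ → σ x = 0) :
    0 ≤ ∫ p : Eu d × Eu d, ‖p.1 - p.2‖ ^ (2 * α - d) * gfun v C σ p := by
  have hc : HasCompactSupport σ := HasCompactSupport.intro (isCompact_closedBall (0 : Eu d) R) fun x hx => hR x (by simpa using hx)
  have hσ' := hσ.continuous_fderiv one_ne_zero
  obtain ⟨M0, hM0⟩ := bound_exists' hσ.continuous hR
  obtain ⟨M1, hM1⟩ := bound_exists' hσ' (fderiv_zero_out hR)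
  obtain ⟨V, hV0, hV⟩ := bound_exists hv.continuous (R + 1)
  have hz := fun k => moll_zero hR k
  have hs1 : ∀ k, ContDiff ℝ 1 (moll σ k) := fun k => (moll_smooth hσ.continuous k).of_le (by exact_mod_cast le_top)
  set M := (3 * M0) * (|C| * (3 * M0) + d * (V * (3 * M1))) with hMdef
  have hb : ∀ k p, ‖gfun v C (moll σ k) p‖ ≤ M := fun k p =>
    gfun_bound v C (hz k) (moll_bound hσ.continuous hM0 k)
      (fun x => by rw [moll_fderiv hσ hc]; exact moll_bound hσ' hM1 k x) hV hV0 p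
  set Sset : Set (Eu d × Eu d) := Metric.closedBall 0 (R + 1) ×ˢ Metric.closedBall 0 (R + 1) with hS
  have hSm : MeasurableSet Sset := measurableSet_closedBall.prod measurableSet_closedBall
  have hM' : 0 ≤ M := (norm_nonneg _).trans (hb 0 (0, 0))
  have hdom : Integrable (fun p : Eu d × Eu d => ‖p.1 - p.2‖ ^ (2 * α - d) * Sset.indicator (fun _ => M) p) := by
    refine kernel_int hd hα.1 (R := R + 1) (M := M) (measurable_const.indicator hSm).aestronglyMeasurable ?_ ?_
    · intro p
      refine (norm_indicator_le_norm_self _ _).trans ?_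
      rw [Real.norm_of_nonneg hM']
    · intro p hp
      apply Set.indicator_of_notMem
      simp only [hS, Set.mem_prod, mem_closedBall_zero_iff, not_and_or, not_le]
      exact hp
  have hlim : Filter.Tendsto (fun k => ∫ p : Eu d × Eu d, ‖p.1 - p.2‖ ^ (2 * α - d) * gfun v C (moll σ k) p) Filter.atTop
      (nhds (∫ p : Eu d × Eu d, ‖p.1 - p.2‖ ^ (2 * α - d) * gfun v C σ p)) := by
    refine tendsto_integral_of_dominated_convergence _ ?_ hdom ?_ ?_
    · intro k
      refine AEStronglyMeasurable.mul ?_ (gfun_cont hv.continuous C (hs1 k)).aestronglyMeasurable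
      exact ((measurable_fst.sub measurable_snd).norm.pow_const _).aestronglyMeasurable
    · intro k
      filter_upwards with p
      rw [norm_mul, Real.norm_of_nonneg (by positivity : 0 ≤ ‖p.1 - p.2‖ ^ (2 * α - (d : ℝ)))]
      gcongr
      by_cases hp : p ∈ Sset
      · rw [Set.indicator_of_mem hp]; exact hb k p
      · rw [Set.indicator_of_notMem hp, gfun_zero v C (hz k), norm_zero]
        simpa only [hS, Set.mem_prod, mem_closedBall_zero_iff, not_and_or, not_le] using hp
    · filter_upwards with p
      refine Filter.Tendsto.const_mul _ ?_
      unfold gfun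
      refine (moll_tendsto hσ.continuous p.1).mul (((moll_tendsto hσ.continuous p.2).const_mul C).sub ?_)
      refine tendsto_finsetSum _ fun i _ => ?_
      refine Filter.Tendsto.const_mul _ ?_
      simp_rw [moll_fderiv hσ hc]
      exact ((ContinuousLinearMap.apply ℝ ℝ (be d i)).continuous.tendsto _).comp (moll_tendsto hσ' p.2)
  exact ge_of_tendsto' hlim fun k => main_smooth hd hα h2α hv hL C hC (moll_smooth hσ.continuous k) (hz k)

/-- The Riesz potential. -/
noncomputable def rpot {d : ℕ} (c α : ℝ) (σ : Eu d → ℝ) (z : Eu d) : ℝ :=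
  ∫ y, c * ‖z - y‖ ^ (2 * α - d) * σ y

theorem hcs_of_R {d : ℕ} {F : Type*} [NormedAddCommGroup F] {σ : Eu d → F} {R : ℝ} (hR : ∀ x, R < ‖x‖ → σ x = 0) : HasCompactSupport σ :=
  HasCompactSupport.intro (isCompact_closedBall (0 : Eu d) R) fun x hx => hR x (by simpa using hx)

theorem rpot_eq {d : ℕ} (c α : ℝ) (σ : Eu d → ℝ) :
    rpot c α σ = MeasureTheory.convolution (fun z : Eu d => c * ‖z‖ ^ (2 * α - d)) σ (ContinuousLinearMap.mul ℝ ℝ) volume := by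
  ext z
  rw [convolution_eq_swap]
  rfl

theorem kc_locInt {d : ℕ} (hd : 1 ≤ d) {α : ℝ} (hα : 0 < α) (c : ℝ) :
    LocallyIntegrable (fun z : Eu d => c * ‖z‖ ^ (2 * α - d)) := by
  exact (kernel_locInt hd hα).smul c

theorem rpot_contDiff {d : ℕ} (hd : 1 ≤ d) {α : ℝ} (hα : 0 < α) (c : ℝ) {σ : Eu d → ℝ} (hσ : ContDiff ℝ 1 σ)
    {R : ℝ} (hR : ∀ x, R < ‖x‖ → σ x = 0) : ContDiff ℝ 1 (rpot c α σ) := by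
  rw [rpot_eq]
  exact (hcs_of_R hR).contDiff_convolution_right (n := 1) _ (kc_locInt hd hα c) hσ

theorem rpot_integrable {d : ℕ} (hd : 1 ≤ d) {α : ℝ} (hα : 0 < α) (c : ℝ) {F : Type*} [NormedAddCommGroup F] [NormedSpace ℝ F] {σ : Eu d → F} (hσ : Continuous σ)
    {R : ℝ} (hR : ∀ x, R < ‖x‖ → σ x = 0) (z : Eu d) : Integrable (fun y => (c * ‖z - y‖ ^ (2 * α - d)) • σ y) := by
  have h := (hcs_of_R hR).convolutionExists_right (ContinuousLinearMap.lsmul ℝ ℝ) (kc_locInt hd hα c) hσ z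
  have h2 := convolutionExistsAt_iff_integrable_swap.1 h
  exact h2

theorem rpot_fderiv {d : ℕ} (hd : 1 ≤ d) {α : ℝ} (hα : 0 < α) (c : ℝ) {σ : Eu d → ℝ} (hσ : ContDiff ℝ 1 σ)
    {R : ℝ} (hR : ∀ x, R < ‖x‖ → σ x = 0) (x w : Eu d) :
    fderiv ℝ (rpot c α σ) x w = ∫ y, c * ‖x - y‖ ^ (2 * α - d) * fderiv ℝ σ y w := by
  rw [rpot_eq, ((hcs_of_R hR).hasFDerivAt_convolution_right (ContinuousLinearMap.mul ℝ ℝ) (kc_locInt hd hα c) hσ x).fderiv,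
    precompR_mul _ _ _ (by simp)]
  have e := integral_sub_left_eq_self (fun y => (c * ‖y‖ ^ (2 * α - d)) • fderiv ℝ σ (x - y)) volume x
  simp only [sub_sub_cancel] at e
  rw [← e, ContinuousLinearMap.integral_apply]
  · simp
  · exact rpot_integrable hd hα c (hσ.continuous_fderiv one_ne_zero) (fderiv_zero_out hR) x

theorem cont_integrable {d : ℕ} {F : Type*} [NormedAddCommGroup F] {f : Eu d → F} (hf : Continuous f) {R : ℝ} (hR : ∀ x, R < ‖x‖ → f x = 0) :
    Integrable f := hf.integrable_of_hasCompactSupport (hcs_of_R hR)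

theorem clm_sum {d : ℕ} (T : Eu d →L[ℝ] ℝ) (w : Eu d) : T w = ∑ i, w i * T (be d i) := by
  have : w = ∑ i, w i • be d i := by
    ext j
    simp [be, Finset.sum_apply, Pi.single_apply]
  conv_lhs => rw [this, map_sum]
  simp

theorem commutator_final {d : ℕ} (hd : 1 ≤ d) {α : ℝ} (hα : α ∈ Set.Ioc (0 : ℝ) 1) (h2α : 2 * α < d)
    {v : Eu d → Eu d} (hv : ContDiff ℝ 1 v) {L : ℝ}
    (hL : ∀ x, ‖fderiv ℝ v x‖ ≤ L) (C : ℝ) (hC : ((d : ℝ) / 2 + 1) * L ≤ C)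
    {σ : Eu d → ℝ} (hσ : ContDiff ℝ 1 σ) {R : ℝ} (hR : ∀ x, R < ‖x‖ → σ x = 0) (c : ℝ) (hc : 0 < c) :
    ∫ x, σ x * fderiv ℝ (rpot c α σ) x (v x) ≤ C * ∫ x, σ x * rpot c α σ x := by
  have h := main_C1 hd hα h2α hv hL C hC hσ hR
  have hσ' := hσ.continuous_fderiv one_ne_zero
  obtain ⟨M0, hM0⟩ := bound_exists' hσ.continuous hR
  obtain ⟨M1, hM1⟩ := bound_exists' hσ' (fderiv_zero_out hR)
  obtain ⟨V, hV0, hV⟩ := bound_exists hv.continuous R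
  have hI := kernel_int hd hα.1 (gfun_cont hv.continuous C hσ).aestronglyMeasurable
    (gfun_bound v C hR hM0 hM1 hV hV0) (gfun_zero v C hR)
  rw [Measure.volume_eq_prod, integral_prod _ hI] at h
  have h2 := mul_nonneg hc.le h
  rw [← integral_const_mul] at h2
  have hr := rpot_contDiff hd hα.1 c hσ hR
  have hrc := hr.continuous
  have hrd := hr.continuous_fderiv one_ne_zero
  have hσc := hσ.continuous
  have hvc := hv.continuous
  have e : ∀ x, c * ∫ y, ‖x - y‖ ^ (2 * α - (d : ℝ)) * gfun v C σ (x, y)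
      = C * (σ x * rpot c α σ x) - σ x * fderiv ℝ (rpot c α σ) x (v x) := by
    intro x
    rw [clm_sum _ (v x)]
    simp_rw [rpot_fderiv hd hα.1 c hσ hR]
    have i1 : Integrable (fun y => c * ‖x - y‖ ^ (2 * α - (d : ℝ)) * σ y) := rpot_integrable hd hα.1 c hσ.continuous hR x
    have i2 : ∀ i, Integrable (fun y => c * ‖x - y‖ ^ (2 * α - (d : ℝ)) * fderiv ℝ σ y (be d i)) := fun i =>
      (rpot_integrable hd hα.1 c hσ' (fderiv_zero_out hR) x).apply_continuousLinearMap (be d i)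
    have pw : ∀ y, c * (‖x - y‖ ^ (2 * α - (d : ℝ)) * gfun v C σ (x, y)) =
        (C * σ x) * (c * ‖x - y‖ ^ (2 * α - (d : ℝ)) * σ y)
          - ∑ i, (σ x * v x i) * (c * ‖x - y‖ ^ (2 * α - (d : ℝ)) * fderiv ℝ σ y (be d i)) := by
      intro y
      unfold gfun
      simp only
      rw [mul_sub, mul_sub, mul_sub, Finset.mul_sum, Finset.mul_sum, Finset.mul_sum]
      congr 1
      · ring
      · refine Finset.sum_congr rfl fun i _ => ?_
        ring
    rw [← integral_const_mul]
    simp_rw [pw]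
    rw [integral_sub (i1.const_mul _) (integrable_finsetSum _ fun i _ => (i2 i).const_mul _), integral_const_mul,
      integral_finsetSum _ fun i _ => (i2 i).const_mul _]
    simp_rw [integral_const_mul]
    rw [Finset.mul_sum]
    congr 1
    · unfold rpot
      ring
    · refine Finset.sum_congr rfl fun i _ => ?_
      ring
  simp_rw [e] at h2
  rw [integral_sub, integral_const_mul] at h2
  · linarith
  · refine (cont_integrable (by fun_prop) (R := R) fun x hx => ?_).const_mul C
    rw [hR x hx, zero_mul]
  · refine (cont_integrable (by fun_prop) (R := R) fun x hx => ?_)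
    rw [hR x hx, zero_mul]

theorem ibp_div {d : ℕ} {X : Eu d → Eu d} (hX : ContDiff ℝ 1 X) {R : ℝ} (hR : ∀ x, R < ‖x‖ → X x = 0)
    {Φ : Eu d → ℝ} (hΦ : ContDiff ℝ 1 Φ) :
    ∫ x, ediv X x * Φ x = - ∫ x, fderiv ℝ Φ x (X x) := by
  have hXc := hX.continuous
  have hXd := hX.continuous_fderiv one_ne_zero
  have hΦc := hΦ.continuous
  have hΦd := hΦ.continuous_fderiv one_ne_zero
  have hX0 : ∀ x, R < ‖x‖ → fderiv ℝ X x = 0 := by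
    intro x hx
    have : X =ᶠ[nhds x] fun _ => 0 := by
      filter_upwards [(isOpen_lt continuous_const continuous_norm).mem_nhds hx] with y hy using hR y hy
    rw [this.fderiv_eq]; simp
  have I1 : ∀ i, Integrable (fun x => (fderiv ℝ X x (be d i)) i * Φ x) := fun i =>
    cont_integrable (R := R) (by fun_prop) fun x hx => by rw [hX0 x hx]; simp
  have I2 : ∀ i, Integrable (fun x => X x i * fderiv ℝ Φ x (be d i)) := fun i =>
    cont_integrable (R := R) (by fun_prop) fun x hx => by rw [hR x hx]; simp
  have I3 : ∀ i, Integrable (fun x => X x i * Φ x) := fun i =>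
    cont_integrable (R := R) (by fun_prop) fun x hx => by rw [hR x hx]; simp
  simp_rw [clm_sum _ (X _)]
  unfold ediv
  simp_rw [Finset.sum_mul]
  rw [integral_finsetSum _ fun i _ => I1 i, integral_finsetSum _ fun i _ => I2 i, ← Finset.sum_neg_distrib]
  refine Finset.sum_congr rfl fun i _ => ?_
  have h := integral_mul_fderiv_eq_neg_fderiv_mul_of_integrable (μ := volume) (f := fun x => X x i) (g := Φ) (v := be d i)
    (by simp_rw [fderiv_coord hX]; exact I1 i) (I2 i) (I3 i)
    (fun x _ => by
      have h := (EuclideanSpace.proj (𝕜 := ℝ) i).hasFDerivAt.comp x (hX.differentiable one_ne_zero x).hasFDerivAt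
      exact h.differentiableAt)
    (fun x _ => hΦ.differentiable one_ne_zero x)
  simp_rw [fderiv_coord hX] at h
  rw [h, neg_neg]

theorem pair_eq {d : ℕ} (hd : 1 ≤ d) {α : ℝ} (hα : 0 < α) (c : ℝ) {f g : Eu d → ℝ} (hf : Continuous f) (hg : Continuous g)
    {R : ℝ} (hRf : ∀ x, R < ‖x‖ → f x = 0) (hRg : ∀ x, R < ‖x‖ → g x = 0) :
    Integrable (fun p : Eu d × Eu d => ‖p.1 - p.2‖ ^ (2 * α - d) * (c * (f p.1 * g p.2))) ∧
    ∫ p : Eu d × Eu d, ‖p.1 - p.2‖ ^ (2 * α - d) * (c * (f p.1 * g p.2)) = ∫ x, f x * rpot c α g x := by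
  obtain ⟨M0, hM0⟩ := bound_exists' hf hRf
  obtain ⟨M1, hM1⟩ := bound_exists' hg hRg
  have hI := kernel_int hd hα (R := R) (M := |c| * (M0 * M1)) (g := fun p : Eu d × Eu d => c * (f p.1 * g p.2))
    (by apply Continuous.aestronglyMeasurable; fun_prop)
    (by
      intro p
      rw [norm_mul, norm_mul]
      have := mul_le_mul (hM0 p.1) (hM1 p.2) (norm_nonneg _) ((norm_nonneg _).trans (hM0 0))
      exact mul_le_mul_of_nonneg_left this (norm_nonneg c))
    (by
      rintro p (hp | hp)
      · rw [hRf _ hp]; simp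
      · rw [hRg _ hp]; simp)
  refine ⟨hI, ?_⟩
  rw [Measure.volume_eq_prod, integral_prod _ hI]
  congr with x
  unfold rpot
  rw [← integral_const_mul]
  congr with y
  simp only
  ring

theorem energy_deriv {d : ℕ} (hd : 1 ≤ d) {α : ℝ} (hα : 0 < α) (c : ℝ) {T : ℝ} {σ : ℝ → Eu d → ℝ}
    (hσ : ContDiffOn ℝ 1 (fun p : ℝ × Eu d => σ p.1 p.2) (Set.Icc 0 T ×ˢ (Set.univ : Set (Eu d))))
    {R : ℝ} (hR : ∀ t ∈ Set.Icc (0 : ℝ) T, ∀ x, R < ‖x‖ → σ t x = 0) {t : ℝ} (ht : t ∈ Set.Ioo 0 T) :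
    HasDerivAt (fun s => ∫ x, σ s x * rpot c α (σ s) x)
      (2 * ∫ x, deriv (fun s => σ s x) t * rpot c α (σ t) x) t := by
  set G : ℝ × Eu d → ℝ := fun p => σ p.1 p.2 with hGdef
  set U : Set (ℝ × Eu d) := Set.Ioo 0 T ×ˢ Set.univ with hU
  have hUo : IsOpen U := isOpen_Ioo.prod isOpen_univ
  have hGU : ContDiffOn ℝ 1 G U := hσ.mono (Set.prod_mono Set.Ioo_subset_Icc_self subset_rfl)
  set W : ℝ × Eu d → ℝ := fun p => fderiv ℝ G p (1, 0) with hWdef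
  have hWc : ContinuousOn W U :=
    (hGU.continuousOn_fderiv_of_isOpen hUo le_rfl).clm_apply continuousOn_const
  have hcurve : ∀ s (x : Eu d), HasDerivAt (fun s : ℝ => (s, x)) ((1 : ℝ), (0 : Eu d)) s := fun s x =>
    (hasDerivAt_id s).prodMk (hasDerivAt_const s x)
  have hW : ∀ s ∈ Set.Ioo 0 T, ∀ x, HasDerivAt (fun s => σ s x) (W (s, x)) s := by
    intro s hs x
    have h1 : DifferentiableAt ℝ G (s, x) :=
      ((hGU.differentiableOn one_ne_zero) (s, x) ⟨hs, trivial⟩).differentiableAt (hUo.mem_nhds ⟨hs, trivial⟩)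
    exact h1.hasFDerivAt.comp_hasDerivAt s (hcurve s x)
  have hW0 : ∀ s ∈ Set.Ioo 0 T, ∀ x, R < ‖x‖ → W (s, x) = 0 := by
    intro s hs x hx
    refine (hW s hs x).unique ?_
    refine (hasDerivAt_const s (0 : ℝ)).congr_of_eventuallyEq ?_
    filter_upwards [isOpen_Ioo.mem_nhds hs] with r hr
    exact hR r (Set.Ioo_subset_Icc_self hr) x hx
  have hcs : ∀ s ∈ Set.Ioo 0 T, Continuous (σ s) := by
    intro s hs
    have := hGU.continuousOn.comp (f := fun x : Eu d => (s, x)) (s := Set.univ) (by fun_prop) (fun x _ => ⟨hs, trivial⟩)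
    exact continuousOn_univ.1 this
  have hcW : ∀ s ∈ Set.Ioo 0 T, Continuous (fun x => W (s, x)) := by
    intro s hs
    have := hWc.comp (f := fun x : Eu d => (s, x)) (s := Set.univ) (by fun_prop) (fun x _ => ⟨hs, trivial⟩)
    exact continuousOn_univ.1 this
  have hRs : ∀ s ∈ Set.Ioo 0 T, ∀ x, R < ‖x‖ → σ s x = 0 := fun s hs => hR s (Set.Ioo_subset_Icc_self hs)
  have hab : Set.Icc (t / 2) ((t + T) / 2) ⊆ Set.Ioo 0 T := by
    intro s hs
    have := ht.1; have := ht.2; have := hs.1; have := hs.2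
    constructor <;> linarith
  have hQ : IsCompact (Set.Icc (t / 2) ((t + T) / 2) ×ˢ Metric.closedBall (0 : Eu d) R) :=
    isCompact_Icc.prod (isCompact_closedBall _ _)
  have hQU : Set.Icc (t / 2) ((t + T) / 2) ×ˢ Metric.closedBall (0 : Eu d) R ⊆ U := Set.prod_mono hab (Set.subset_univ _)
  obtain ⟨M0, hM0⟩ := hQ.exists_bound_of_continuousOn (hGU.continuousOn.mono hQU)
  obtain ⟨M1, hM1⟩ := hQ.exists_bound_of_continuousOn (hWc.mono hQU)
  set N0 := max M0 0
  set N1 := max M1 0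
  have n0 : 0 ≤ N0 := le_max_right _ _
  have n1 : 0 ≤ N1 := le_max_right _ _
  have b0 : ∀ s ∈ Set.Icc (t / 2) ((t + T) / 2), ∀ x, ‖σ s x‖ ≤ N0 := by
    intro s hs x
    by_cases hx : R < ‖x‖
    · rw [hRs s (hab hs) x hx, norm_zero]; exact n0
    · exact (hM0 (s, x) ⟨hs, by simpa using hx⟩).trans (le_max_left _ _)
  have b1 : ∀ s ∈ Set.Icc (t / 2) ((t + T) / 2), ∀ x, ‖W (s, x)‖ ≤ N1 := by
    intro s hs x
    by_cases hx : R < ‖x‖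
    · rw [hW0 s (hab hs) x hx, norm_zero]; exact n1
    · exact (hM1 (s, x) ⟨hs, by simpa using hx⟩).trans (le_max_left _ _)
  set Sset : Set (Eu d × Eu d) := Metric.closedBall 0 R ×ˢ Metric.closedBall 0 R with hS
  have hSm : MeasurableSet Sset := measurableSet_closedBall.prod measurableSet_closedBall
  set M : ℝ := |c| * (N1 * N0 + N0 * N1) with hMdef
  have hM' : 0 ≤ M := by positivity
  have hdom : Integrable (fun p : Eu d × Eu d => ‖p.1 - p.2‖ ^ (2 * α - d) * Sset.indicator (fun _ => M) p) := by
    refine kernel_int hd hα (R := R) (M := M) (measurable_const.indicator hSm).aestronglyMeasurable ?_ ?_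
    · intro p
      refine (norm_indicator_le_norm_self _ _).trans ?_
      rw [Real.norm_of_nonneg hM']
    · intro p hp
      apply Set.indicator_of_notMem
      simp only [hS, Set.mem_prod, mem_closedBall_zero_iff, not_and_or, not_le]
      exact hp
  have hKm : AEStronglyMeasurable (fun p : Eu d × Eu d => ‖p.1 - p.2‖ ^ (2 * α - (d : ℝ))) :=
    ((measurable_fst.sub measurable_snd).norm.pow_const _).aestronglyMeasurable
  have hct := hcs t ht
  have hcWt := hcW t ht
  have key := hasDerivAt_integral_of_dominated_loc_of_deriv_le (μ := (volume : Measure (Eu d × Eu d))) (x₀ := t)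
    (s := Set.Icc (t / 2) ((t + T) / 2))
    (F := fun s p => ‖p.1 - p.2‖ ^ (2 * α - (d : ℝ)) * (c * (σ s p.1 * σ s p.2)))
    (F' := fun s p => ‖p.1 - p.2‖ ^ (2 * α - (d : ℝ)) * (c * (W (s, p.1) * σ s p.2 + σ s p.1 * W (s, p.2))))
    (bound := fun p => ‖p.1 - p.2‖ ^ (2 * α - (d : ℝ)) * Sset.indicator (fun _ => M) p)
    (Icc_mem_nhds (by linarith [ht.1]) (by linarith [ht.2]))
    (by
      filter_upwards [isOpen_Ioo.mem_nhds ht] with s hs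
      exact (pair_eq hd hα c (hcs s hs) (hcs s hs) (hRs s hs) (hRs s hs)).1.aestronglyMeasurable)
    (pair_eq hd hα c hct hct (hRs t ht) (hRs t ht)).1
    (by
      refine hKm.mul (Continuous.aestronglyMeasurable ?_)
      have h1 := hcWt.comp (continuous_fst (X := Eu d) (Y := Eu d))
      have h2 := hcWt.comp (continuous_snd (X := Eu d) (Y := Eu d))
      have h3 := hct.comp (continuous_fst (X := Eu d) (Y := Eu d))
      have h4 := hct.comp (continuous_snd (X := Eu d) (Y := Eu d))
      exact continuous_const.mul ((h1.mul h4).add (h3.mul h2)))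
    (by
      filter_upwards with p s hs
      rw [norm_mul, Real.norm_of_nonneg (by positivity : 0 ≤ ‖p.1 - p.2‖ ^ (2 * α - (d : ℝ)))]
      refine mul_le_mul_of_nonneg_left ?_ (by positivity)
      by_cases hp : p ∈ Sset
      · rw [Set.indicator_of_mem hp, norm_mul]
        refine mul_le_mul_of_nonneg_left ?_ (norm_nonneg c)
        refine (norm_add_le _ _).trans ?_
        rw [norm_mul, norm_mul]
        exact add_le_add (mul_le_mul (b1 s hs _) (b0 s hs _) (norm_nonneg _) n1)
          (mul_le_mul (b0 s hs _) (b1 s hs _) (norm_nonneg _) n0)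
      · rw [Set.indicator_of_notMem hp]
        simp only [hS, Set.mem_prod, mem_closedBall_zero_iff, not_and_or, not_le] at hp
        have hs' := hab hs
        rcases hp with hp | hp
        · rw [hRs s hs' _ hp, hW0 s hs' _ hp]; simp
        · rw [hRs s hs' _ hp, hW0 s hs' _ hp]; simp)
    hdom
    (by
      filter_upwards with p s hs
      have h1 := hW s (hab hs) p.1
      have h2 := hW s (hab hs) p.2
      exact ((h1.mul h2).const_mul c).const_mul _)
  have k2 := key.2
  have P1 := pair_eq hd hα c hcWt hct (hW0 t ht) (hRs t ht)
  have P2 := pair_eq hd hα c hct hcWt (hRs t ht) (hW0 t ht)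
  have hswap : ∫ p : Eu d × Eu d, ‖p.1 - p.2‖ ^ (2 * α - d) * (c * (σ t p.1 * W (t, p.2)))
      = ∫ p : Eu d × Eu d, ‖p.1 - p.2‖ ^ (2 * α - d) * (c * (W (t, p.1) * σ t p.2)) := by
    rw [Measure.volume_eq_prod, ← integral_prod_swap]
    congr with p
    simp only [Prod.fst_swap, Prod.snd_swap]
    rw [norm_sub_rev]; ring
  have e : ∫ p : Eu d × Eu d, ‖p.1 - p.2‖ ^ (2 * α - (d : ℝ)) * (c * (W (t, p.1) * σ t p.2 + σ t p.1 * W (t, p.2)))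
      = 2 * ∫ x, deriv (fun s => σ s x) t * rpot c α (σ t) x := by
    simp_rw [mul_add]
    rw [integral_add P1.1 P2.1, hswap, P1.2, two_mul]
    simp_rw [(hW t ht _).deriv]
  rw [e] at k2
  refine k2.congr_of_eventuallyEq ?_
  filter_upwards [isOpen_Ioo.mem_nhds ht] with s hs
  exact (pair_eq hd hα c (hcs s hs) (hcs s hs) (hRs s hs) (hRs s hs)).2.symm

theorem slice_contDiff {d : ℕ} {F : Type*} [NormedAddCommGroup F] [NormedSpace ℝ F] {T : ℝ} {σ : ℝ → Eu d → F}
    (hσ : ContDiffOn ℝ 1 (fun p : ℝ × Eu d => σ p.1 p.2) (Set.Icc 0 T ×ˢ (Set.univ : Set (Eu d))))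
    {t : ℝ} (ht : t ∈ Set.Ioo 0 T) : ContDiff ℝ 1 (σ t) := by
  have := hσ.comp (g := fun p : ℝ × Eu d => σ p.1 p.2) (f := fun x : Eu d => (t, x)) (s := Set.univ)
    (by fun_prop) (fun x _ => ⟨Set.Ioo_subset_Icc_self ht, trivial⟩)
  exact contDiffOn_univ.1 this

theorem slice_diff {d : ℕ} {T : ℝ} {σ : ℝ → Eu d → ℝ}
    (hσ : ContDiffOn ℝ 1 (fun p : ℝ × Eu d => σ p.1 p.2) (Set.Icc 0 T ×ˢ (Set.univ : Set (Eu d))))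
    {t : ℝ} (ht : t ∈ Set.Ioo 0 T) (x : Eu d) : DifferentiableAt ℝ (fun s => σ s x) t := by
  have h1 : DifferentiableAt ℝ (fun p : ℝ × Eu d => σ p.1 p.2) (t, x) :=
    ((hσ.differentiableOn one_ne_zero) (t, x) ⟨Set.Ioo_subset_Icc_self ht, trivial⟩).differentiableAt
      (prod_mem_nhds (Icc_mem_nhds ht.1 ht.2) Filter.univ_mem)
  exact h1.comp t (f := fun s : ℝ => (s, x)) (by fun_prop)

/-- Modulated Riesz interaction energy estimate: for two compactly supported solutions of
the continuity equations `A ∂_t ρ + B ∇·(ρu) = 0` and `A ∂_t n + B ∇·(nv) = 0`, with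
`E(t) = ∫ (ρ−n) (K ⋆ (ρ−n))` and Riesz kernel `K(x) = c|x|^{2α−d}`,
`−B ∫ ρ (u−v)·∇(K ⋆ (ρ−n)) ≤ −(A/2) E' + C B E` for a constant `C` depending only on
`d`, `α` and `L = sup |∇v|`. -/
theorem modulated_riesz_energy_estimate
    (d : ℕ) (hd : 1 ≤ d) (α : ℝ) (hα : α ∈ Set.Ioc (0 : ℝ) 1) (h2α : 2 * α < d) (L : ℝ) :
    ∃ C > 0, ∀ (c : ℝ), 0 < c → ∀ (A B T : ℝ), 0 < A → 0 < B → 0 < T →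
      ∀ (ρ n : ℝ → EuclideanSpace ℝ (Fin d) → ℝ)
        (u v : ℝ → EuclideanSpace ℝ (Fin d) → EuclideanSpace ℝ (Fin d)),
        ContDiffOn ℝ 1 (fun p : ℝ × EuclideanSpace ℝ (Fin d) => ρ p.1 p.2)
          (Set.Icc 0 T ×ˢ (Set.univ : Set (EuclideanSpace ℝ (Fin d)))) →
        ContDiffOn ℝ 1 (fun p : ℝ × EuclideanSpace ℝ (Fin d) => n p.1 p.2)
          (Set.Icc 0 T ×ˢ (Set.univ : Set (EuclideanSpace ℝ (Fin d)))) →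
        (∀ t ∈ Set.Icc (0 : ℝ) T, ∀ x, 0 ≤ ρ t x) →
        (∀ t ∈ Set.Icc (0 : ℝ) T, ∀ x, 0 ≤ n t x) →
        (∃ S : Set (EuclideanSpace ℝ (Fin d)), IsCompact S ∧
          ∀ t ∈ Set.Icc (0 : ℝ) T,
            Function.support (ρ t) ⊆ S ∧ Function.support (n t) ⊆ S) →
        ContDiffOn ℝ 1 (fun p : ℝ × EuclideanSpace ℝ (Fin d) => u p.1 p.2)
          (Set.Icc 0 T ×ˢ (Set.univ : Set (EuclideanSpace ℝ (Fin d)))) →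
        ContDiffOn ℝ 1 (fun p : ℝ × EuclideanSpace ℝ (Fin d) => v p.1 p.2)
          (Set.Icc 0 T ×ˢ (Set.univ : Set (EuclideanSpace ℝ (Fin d)))) →
        (∀ t ∈ Set.Icc (0 : ℝ) T, ∀ x, ‖fderiv ℝ (v t) x‖ ≤ L) →
        (∀ t ∈ Set.Ioo (0 : ℝ) T, ∀ x,
          A * deriv (fun s => ρ s x) t + B * ediv (fun y => ρ t y • u t y) x = 0) →
        (∀ t ∈ Set.Ioo (0 : ℝ) T, ∀ x,
          A * deriv (fun s => n s x) t + B * ediv (fun y => n t y • v t y) x = 0) →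
        ∀ t ∈ Set.Ioo (0 : ℝ) T,
          ∃ E' : ℝ,
            HasDerivAt
              (fun s => ∫ x, (ρ s x - n s x) *
                ∫ y, c * ‖x - y‖ ^ (2 * α - d) * (ρ s y - n s y)) E' t ∧
            -B * (∫ x, ρ t x *
                ⟪u t x - v t x,
                  gradient (fun z => ∫ y, c * ‖z - y‖ ^ (2 * α - d) * (ρ t y - n t y)) x⟫)
              ≤ -(A / 2) * E'
                + C * B * ∫ x, (ρ t x - n t x) *
                    ∫ y, c * ‖x - y‖ ^ (2 * α - d) * (ρ t y - n t y) := by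
  refine ⟨((d : ℝ) / 2 + 1) * |L| + 1, by positivity, ?_⟩
  intro c hc A B T hA hB hT ρ n u v hρ hn _ _ hS hu hv hL hρe hne t ht
  have hC : ((d : ℝ) / 2 + 1) * L ≤ ((d : ℝ) / 2 + 1) * |L| + 1 := by
    have := mul_le_mul_of_nonneg_left (le_abs_self L) (by positivity : 0 ≤ (d : ℝ) / 2 + 1)
    linarith
  set C := ((d : ℝ) / 2 + 1) * |L| + 1 with hCdef
  obtain ⟨S, hSc, hSs⟩ := hS
  obtain ⟨R, hR⟩ := hSc.isBounded.exists_norm_le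
  have hρ0 : ∀ t ∈ Set.Icc (0 : ℝ) T, ∀ x, R < ‖x‖ → ρ t x = 0 := by
    intro s hs x hx
    by_contra h
    exact absurd (hR x ((hSs s hs).1 h)) (not_le.2 hx)
  have hn0 : ∀ t ∈ Set.Icc (0 : ℝ) T, ∀ x, R < ‖x‖ → n t x = 0 := by
    intro s hs x hx
    by_contra h
    exact absurd (hR x ((hSs s hs).2 h)) (not_le.2 hx)
  have htI := Set.Ioo_subset_Icc_self ht
  have hσ0 : ∀ t ∈ Set.Icc (0 : ℝ) T, ∀ x, R < ‖x‖ → ρ t x - n t x = 0 := by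
    intro s hs x hx
    rw [hρ0 s hs x hx, hn0 s hs x hx, sub_zero]
  have hE := energy_deriv hd hα.1 c (σ := fun s x => ρ s x - n s x) (hρ.sub hn) hσ0 ht
  refine ⟨_, hE, ?_⟩
  have cρ := slice_contDiff hρ ht
  have cn := slice_contDiff hn ht
  have cu := slice_contDiff hu ht
  have cv := slice_contDiff hv ht
  have cσ : ContDiff ℝ 1 (fun x => ρ t x - n t x) := cρ.sub cn
  have hmain := commutator_final hd hα h2α cv (hL t htI) C hC cσ (hσ0 t htI) c hc
  set Φ : Eu d → ℝ := rpot c α (fun x => ρ t x - n t x) with hΦ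
  have cΦ : ContDiff ℝ 1 Φ := rpot_contDiff hd hα.1 c cσ (hσ0 t htI)
  have X1 := ibp_div (X := fun y => ρ t y • u t y) (R := R) (cρ.smul cu)
    (fun x hx => by simp only [hρ0 t htI x hx, zero_smul]) cΦ
  have X2 := ibp_div (X := fun y => n t y • v t y) (R := R) (cn.smul cv)
    (fun x hx => by simp only [hn0 t htI x hx, zero_smul]) cΦ
  have k1 := cρ.continuous
  have k2 := cn.continuous
  have k3 := cu.continuous
  have k4 := cv.continuous
  have k5 := cΦ.continuous
  have k6 := cΦ.continuous_fderiv one_ne_zero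
  have hgrad : ∀ x w, ⟪w, gradient Φ x⟫ = fderiv ℝ Φ x w := by
    intro x w
    rw [real_inner_comm]
    simp [gradient]
  have I1 : Integrable (fun x => fderiv ℝ Φ x (ρ t x • u t x)) :=
    cont_integrable (R := R) (by fun_prop) fun x hx => by rw [hρ0 t htI x hx]; simp
  have I2 : Integrable (fun x => fderiv ℝ Φ x (n t x • v t x)) :=
    cont_integrable (R := R) (by fun_prop) fun x hx => by rw [hn0 t htI x hx]; simp
  have I3 : Integrable (fun x => fderiv ℝ Φ x (ρ t x • v t x)) :=
    cont_integrable (R := R) (by fun_prop) fun x hx => by rw [hρ0 t htI x hx]; simp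
  have cX1 : ContDiff ℝ 1 (fun y => ρ t y • u t y) := cρ.smul cu
  have cX2 : ContDiff ℝ 1 (fun y => n t y • v t y) := cn.smul cv
  have zero_ediv : ∀ (X : Eu d → Eu d), (∀ x, R < ‖x‖ → X x = 0) → ∀ x, R < ‖x‖ → ediv X x = 0 := by
    intro X hX x hx
    have : X =ᶠ[nhds x] fun _ => 0 := by
      filter_upwards [(isOpen_lt continuous_const continuous_norm).mem_nhds hx] with y hy using hX y hy
    unfold ediv
    rw [this.fderiv_eq]; simp
  have J : ∀ (X : Eu d → Eu d), ContDiff ℝ 1 X → (∀ x, R < ‖x‖ → X x = 0) → Integrable (fun x => ediv X x * Φ x) := by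
    intro X hX hX0
    have q := hX.continuous_fderiv one_ne_zero
    refine cont_integrable (R := R) ?_ fun x hx => by rw [zero_ediv X hX0 x hx, zero_mul]
    unfold ediv
    fun_prop
  have J1 := J _ cX1 (fun x hx => by simp only [hρ0 t htI x hx, zero_smul])
  have J2 := J _ cX2 (fun x hx => by simp only [hn0 t htI x hx, zero_smul])
  have hD : A * ∫ x, deriv (fun s => ρ s x - n s x) t * Φ x
      = B * (∫ x, fderiv ℝ Φ x (ρ t x • u t x)) - B * ∫ x, fderiv ℝ Φ x (n t x • v t x) := by
    have e : ∀ x, A * (deriv (fun s => ρ s x - n s x) t * Φ x)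
        = B * (ediv (fun y => n t y • v t y) x * Φ x) - B * (ediv (fun y => ρ t y • u t y) x * Φ x) := by
      intro x
      have e1 : deriv (fun s => ρ s x - n s x) t = deriv (fun s => ρ s x) t - deriv (fun s => n s x) t :=
        deriv_fun_sub (slice_diff hρ ht x) (slice_diff hn ht x)
      rw [e1]
      have e2 := hρe t ht x
      have e3 := hne t ht x
      linear_combination (Φ x) * e2 - (Φ x) * e3
    rw [← integral_const_mul]
    simp_rw [e]
    rw [integral_sub (J2.const_mul B) (J1.const_mul B), integral_const_mul, integral_const_mul, X1, X2]
    ring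
  have hLHS : ∫ x, ρ t x * ⟪u t x - v t x, gradient Φ x⟫
      = (∫ x, fderiv ℝ Φ x (ρ t x • u t x)) - ∫ x, fderiv ℝ Φ x (ρ t x • v t x) := by
    rw [← integral_sub I1 I3]
    congr with x
    rw [hgrad, map_sub, map_smul, map_smul, smul_eq_mul, smul_eq_mul, mul_sub]
  have hcom : ∫ x, (ρ t x - n t x) * fderiv ℝ Φ x (v t x)
      = (∫ x, fderiv ℝ Φ x (ρ t x • v t x)) - ∫ x, fderiv ℝ Φ x (n t x • v t x) := by
    rw [← integral_sub I3 I2]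
    congr with x
    rw [map_smul, map_smul, smul_eq_mul, smul_eq_mul, sub_mul]
  rw [hcom] at hmain
  change -B * (∫ x, ρ t x * ⟪u t x - v t x, gradient Φ x⟫) ≤
    -(A / 2) * (2 * ∫ x, deriv (fun s => ρ s x - n s x) t * Φ x) + C * B * ∫ x, (ρ t x - n t x) * Φ x
  rw [hLHS]
  have hm2 := mul_le_mul_of_nonneg_left hmain hB.le
  linarith
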